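/- arXiv:2104.03845 — 3 statements merged into one kernel-verified Lean document; each statement's English description precedes it below -/
import Mathlib

section
/- For every simple graph G on n vertices that is not complete, the toughness satisfies t(G) ≥ μ_n μ_2 / (n(μ_n − δ)), where μ_2 and μ_n are the second smallest and largest Laplacian eigenvalues and δ is the minimum degree. -/
open SimpleGraph Matrix

/-- The (unordered) eigenvalues of the Laplacian matrix `L = D - A` of `G`. -/
noncomputable def lapEigs {V : Type*} [Fintype V] [DecidableEq V]
    (G : SimpleGraph V) [DecidableRel G.Adj] : V → ℝ :=
  (SimpleGraph.posSemidef_lapMatrix ℝ G).1.eigenvalues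

/-- `μ : Fin n → ℝ` is the nondecreasing list of the Laplacian eigenvalues of `G`
(so `μ 0 = μ_1 ≤ μ 1 = μ_2 ≤ … ≤ μ (n-1) = μ_n`). -/
def IsLapSpectrum {V : Type*} [Fintype V] [DecidableEq V]
    (G : SimpleGraph V) [DecidableRel G.Adj] {n : ℕ} (μ : Fin n → ℝ) : Prop :=
  Monotone μ ∧ ∃ σ : Fin n ≃ V, ∀ i, μ i = lapEigs G (σ i)

/-- The number of connected components of `G - S`. -/
noncomputable def numComp {V : Type*} (G : SimpleGraph V) (S : Finset V) : ℕ :=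
  Nat.card (G.induce ((↑S : Set V)ᶜ)).ConnectedComponent

section Spec
variable {V : Type*} [Fintype V] [DecidableEq V] (G : SimpleGraph V) [DecidableRel G.Adj]

/-- The eigenvectors of the Laplacian as plain functions. -/
noncomputable def lapVec (i : V) : V → ℝ :=
  ⇑((SimpleGraph.posSemidef_lapMatrix ℝ G).1.eigenvectorBasis i)

lemma lapVec_mul (i : V) : G.lapMatrix ℝ *ᵥ lapVec G i = lapEigs G i • lapVec G i :=
  (SimpleGraph.posSemidef_lapMatrix ℝ G).1.mulVec_eigenvectorBasis i

lemma lapVec_parseval (x y : V → ℝ) :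
    x ⬝ᵥ y = ∑ i, (lapVec G i ⬝ᵥ x) * (lapVec G i ⬝ᵥ y) := by
  have h := ((SimpleGraph.posSemidef_lapMatrix ℝ G).1.eigenvectorBasis).sum_inner_mul_inner
    (WithLp.toLp 2 x) (WithLp.toLp 2 y)
  simp only [EuclideanSpace.inner_eq_star_dotProduct, star_trivial] at h
  rw [dotProduct_comm x y]
  refine h.symm.trans (Finset.sum_congr rfl fun i _ => ?_)
  congr 1
  exact dotProduct_comm _ _

lemma lapVec_dot_mul (i : V) (x : V → ℝ) :
    lapVec G i ⬝ᵥ (G.lapMatrix ℝ *ᵥ x) = lapEigs G i * (lapVec G i ⬝ᵥ x) := by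
  rw [dotProduct_mulVec, ← mulVec_transpose, (G.isSymm_lapMatrix (R := ℝ)).eq, lapVec_mul,
    smul_dotProduct, smul_eq_mul]

lemma lap_quad (x : V → ℝ) :
    x ⬝ᵥ (G.lapMatrix ℝ *ᵥ x) = ∑ i, lapEigs G i * (lapVec G i ⬝ᵥ x) ^ 2 := by
  rw [lapVec_parseval G]
  refine Finset.sum_congr rfl fun i _ => ?_
  rw [lapVec_dot_mul]; ring

lemma lap_sq (x : V → ℝ) : x ⬝ᵥ x = ∑ i, (lapVec G i ⬝ᵥ x) ^ 2 := by
  rw [lapVec_parseval G]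
  refine Finset.sum_congr rfl fun i _ => ?_
  ring

lemma lap_form (x : V → ℝ) : x ⬝ᵥ (G.lapMatrix ℝ *ᵥ x) =
    (∑ i, ∑ j, if G.Adj i j then (x i - x j) ^ 2 else 0) / 2 := by
  rw [← G.lapMatrix_toLinearMap₂' ℝ x, toLinearMap₂'_apply']

lemma lapEigs_nonneg (i : V) : 0 ≤ lapEigs G i :=
  (SimpleGraph.posSemidef_lapMatrix ℝ G).eigenvalues_nonneg i

lemma lap_le (M : ℝ) (hM : ∀ i, lapEigs G i ≤ M) (x : V → ℝ) :
    x ⬝ᵥ (G.lapMatrix ℝ *ᵥ x) ≤ M * (x ⬝ᵥ x) := by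
  rw [lap_quad, lap_sq G, Finset.mul_sum]
  exact Finset.sum_le_sum fun i _ => mul_le_mul_of_nonneg_right (hM i) (sq_nonneg _)

lemma lap_ge (m : ℝ) (i₀ : V) (hm : ∀ i, i ≠ i₀ → m ≤ lapEigs G i) (x : V → ℝ)
    (hx : ∑ i, x i = 0) : m * (x ⬝ᵥ x) ≤ x ⬝ᵥ (G.lapMatrix ℝ *ᵥ x) := by
  rw [lap_quad, lap_sq G, Finset.mul_sum]
  refine Finset.sum_le_sum fun i _ => ?_
  rcases le_or_gt m 0 with h0 | h0
  · exact mul_le_mul_of_nonneg_right (h0.trans (lapEigs_nonneg G i)) (sq_nonneg _)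
  by_cases hi : i = i₀
  swap
  · exact mul_le_mul_of_nonneg_right (hm i hi) (sq_nonneg _)
  subst hi
  have hone : ∀ j, j ≠ i → lapVec G j ⬝ᵥ (fun _ => (1 : ℝ)) = 0 := by
    intro j hj
    have h1 := lapVec_dot_mul G j (fun _ => (1 : ℝ))
    have h2 : G.lapMatrix ℝ *ᵥ (fun _ => (1 : ℝ)) = 0 := G.lapMatrix_mulVec_const_eq_zero
    rw [h2, dotProduct_zero] at h1
    have h3 := hm j hj
    rcases mul_eq_zero.1 h1.symm with h | h
    · linarith
    · exact h
  have hp : (fun _ => (1 : ℝ)) ⬝ᵥ x =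
      (lapVec G i ⬝ᵥ (fun _ => (1 : ℝ))) * (lapVec G i ⬝ᵥ x) := by
    rw [lapVec_parseval G]
    refine Finset.sum_eq_single i (fun j _ hj => by rw [hone j hj, zero_mul]) (by simp)
  have hq : (fun _ => (1 : ℝ)) ⬝ᵥ (fun _ : V => (1 : ℝ)) =
      (lapVec G i ⬝ᵥ (fun _ => (1 : ℝ))) * (lapVec G i ⬝ᵥ (fun _ => (1 : ℝ))) := by
    rw [lapVec_parseval G]
    refine Finset.sum_eq_single i (fun j _ hj => by rw [hone j hj, zero_mul]) (by simp)
  have hne : lapVec G i ⬝ᵥ (fun _ => (1 : ℝ)) ≠ 0 := by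
    intro h
    rw [h] at hq
    simp only [dotProduct, mul_one, Finset.sum_const, Finset.card_univ, nsmul_eq_mul, mul_zero] at hq
    have : Nonempty V := ⟨i⟩
    have := Fintype.card_ne_zero (α := V)
    exact this (by exact_mod_cast hq)
  have h0 : (fun _ => (1 : ℝ)) ⬝ᵥ x = 0 := by simpa [dotProduct] using hx
  rw [h0] at hp
  rcases mul_eq_zero.1 hp.symm with h | h
  · exact absurd h hne
  · rw [h]; simp

/-- Fiedler-type bound. -/
lemma sep_bound (m : ℝ) (i₀ : V) (hm : ∀ i, i ≠ i₀ → m ≤ lapEigs G i) (S A : Finset V)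
    (hA : A.Nonempty) (hAS : Disjoint A S) (hB : ((A ∪ S)ᶜ : Finset V).Nonempty)
    (hadj : ∀ i j, G.Adj i j → i ∉ S → j ∉ S → (i ∈ A ↔ j ∈ A)) : m ≤ S.card := by
  classical
  set B : Finset V := (A ∪ S)ᶜ with hBdef
  have hAB : Disjoint A B := by
    rw [Finset.disjoint_left]; intro i hi; simp [hBdef, hi]
  have hSA : ∀ i ∈ S, i ∉ A := fun i hi h => Finset.disjoint_left.1 hAS h hi
  have hBm : ∀ i, i ∈ B ↔ i ∉ A ∧ i ∉ S := by intro i; simp [hBdef]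
  let x : V → ℝ := fun i => (if i ∈ A then (B.card : ℝ) else 0) - if i ∈ B then (A.card : ℝ) else 0
  have hxS : ∀ i ∈ S, x i = 0 := by
    intro i hi
    simp [x, hSA i hi, hBm, hi]
  have hsum : ∑ i, x i = 0 := by
    simp only [x, Finset.sum_sub_distrib, Finset.sum_ite_mem, Finset.univ_inter, Finset.sum_const,
      nsmul_eq_mul]
    ring
  have hge := lap_ge G m i₀ hm x hsum
  have hpos : 0 < x ⬝ᵥ x := by
    obtain ⟨a, ha⟩ := hA
    have hxa : x a = B.card := by
      simp [x, ha, Finset.disjoint_left.1 hAB ha]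
    have : (0 : ℝ) < B.card := by exact_mod_cast hB.card_pos
    refine Finset.sum_pos' (fun i _ => mul_self_nonneg _) ⟨a, Finset.mem_univ _, ?_⟩
    rw [hxa]; positivity
  have hle : x ⬝ᵥ (G.lapMatrix ℝ *ᵥ x) ≤ S.card * (x ⬝ᵥ x) := by
    rw [lap_form]
    have : (∑ i, ∑ j, if G.Adj i j then (x i - x j) ^ 2 else 0) ≤
        ∑ i, ∑ j, ((if j ∈ S then x i * x i else 0) + (if i ∈ S then x j * x j else 0)) := by
      refine Finset.sum_le_sum fun i _ => Finset.sum_le_sum fun j _ => ?_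
      have h1 := mul_self_nonneg (x i)
      have h2 := mul_self_nonneg (x j)
      by_cases hij : G.Adj i j
      swap
      · rw [if_neg hij]; split_ifs <;> linarith
      rw [if_pos hij]
      by_cases hi : i ∈ S <;> by_cases hj : j ∈ S
      · simp [hi, hj, hxS]
      · simp [hi, hj, hxS, sq]
      · simp [hi, hj, hxS, sq]
      · have := hadj i j hij hi hj
        simp [hi, hj, x, hBm, this]
    have h2 : ∑ i, ∑ j, ((if j ∈ S then x i * x i else 0) + (if i ∈ S then x j * x j else 0))
        = 2 * (S.card * (x ⬝ᵥ x)) := by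
      simp only [Finset.sum_add_distrib]
      rw [Finset.sum_comm (f := fun i j => if i ∈ S then x j * x j else 0)]
      simp only [Finset.sum_ite_mem, Finset.univ_inter, Finset.sum_const, nsmul_eq_mul, dotProduct,
        ← Finset.mul_sum]
      ring
    linarith
  exact le_of_mul_le_mul_right (hge.trans hle) hpos

/-- Hoffman-type bound. -/
lemma indep_bound (M : ℝ) (hM : ∀ i, lapEigs G i ≤ M) (I : Finset V) (hI : I.Nonempty)
    (hind : ∀ i ∈ I, ∀ j ∈ I, ¬ G.Adj i j) :
    I.card * M ≤ Fintype.card V * (M - G.minDegree) := by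
  classical
  set N : ℝ := (Fintype.card V : ℝ) with hN
  set c : ℝ := (I.card : ℝ) with hc
  let f : V → ℝ := fun i => if i ∈ I then 1 else 0
  let x : V → ℝ := fun i => N * f i - c
  have hf : ∑ i, f i = c := by simp [f, hc]
  have hff : ∀ i, f i * f i = f i := by intro i; simp [f]
  have hcp : 0 < c := by rw [hc]; exact_mod_cast hI.card_pos
  have hNp : 0 < N := by
    rw [hN]; exact_mod_cast Fintype.card_pos_iff.2 ⟨hI.choose⟩
  have hxx : x ⬝ᵥ x = N * c * (N - c) := by
    have : ∀ i, x i * x i = (N ^ 2 - 2 * N * c) * f i + c ^ 2 := by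
      intro i
      have := hff i
      simp only [x]
      linear_combination N ^ 2 * this
    simp only [dotProduct, this, Finset.sum_add_distrib, ← Finset.mul_sum, hf, Finset.sum_const,
      Finset.card_univ, nsmul_eq_mul, ← hN]
    ring
  have hq : N ^ 2 * (c * G.minDegree) ≤ x ⬝ᵥ (G.lapMatrix ℝ *ᵥ x) := by
    rw [lap_form]
    have h1 : ∀ i j, (if G.Adj i j then (x i - x j) ^ 2 else 0) =
        N ^ 2 * ((if G.Adj i j then f i else 0) + (if G.Adj i j then f j else 0)) := by
      intro i j
      by_cases hij : G.Adj i j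
      · have : f i * f j = 0 := by
          by_cases hi : i ∈ I <;> by_cases hj : j ∈ I <;> simp [f, hi, hj]
          exact hind i hi j hj hij
        simp only [if_pos hij, x]
        linear_combination N ^ 2 * (hff i + hff j - 2 * this)
      · simp [hij]
    have h2 : ∀ i, ∑ j, (if G.Adj i j then f i else 0) = G.degree i * f i := by
      intro i
      rw [← Finset.sum_filter, Finset.sum_const, nsmul_eq_mul, ← G.neighborFinset_eq_filter,
        G.card_neighborFinset_eq_degree]
    simp only [h1, ← Finset.mul_sum, Finset.sum_add_distrib]
    rw [Finset.sum_comm (f := fun i j => if G.Adj i j then f j else 0)]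
    have h3 : ∀ j, ∑ i, (if G.Adj i j then f j else 0) = G.degree j * f j := by
      intro j
      rw [← h2]
      simp only [G.adj_comm]
    simp only [h2, h3]
    have h4 : c * G.minDegree ≤ ∑ i, G.degree i * f i := by
      rw [← hf, Finset.sum_mul]
      refine Finset.sum_le_sum fun i _ => ?_
      rw [mul_comm]
      refine mul_le_mul_of_nonneg_right (by exact_mod_cast G.minDegree_le_degree i) ?_
      simp only [f]; split_ifs <;> norm_num
    nlinarith [sq_nonneg N]
  have hle := lap_le G M hM x
  rw [hxx] at hle
  have : (N * c) * (N * G.minDegree) ≤ (N * c) * (M * (N - c)) := by linarith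
  have := le_of_mul_le_mul_left this (by positivity)
  linarith

end Spec

theorem stmt4 {n : ℕ} [NeZero n] (hn : 2 ≤ n) (G : SimpleGraph (Fin n)) [DecidableRel G.Adj]
    (hnc : G ≠ ⊤) (μ : Fin n → ℝ) (hμ : IsLapSpectrum G μ)
    (S : Finset (Fin n)) (hdis : 2 ≤ numComp G S) :
    μ ⟨n - 1, by omega⟩ * μ ⟨1, by omega⟩ / ((n : ℝ) * (μ ⟨n - 1, by omega⟩ - G.minDegree)) *
      numComp G S ≤ (S.card : ℝ) := by
  classical
  obtain ⟨hmono, σ, hσ⟩ := hμ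
  set M := μ ⟨n - 1, by omega⟩ with hMdef
  set m := μ ⟨1, by omega⟩ with hmdef
  have hM : ∀ i, lapEigs G i ≤ M := by
    intro i
    have := hσ (σ.symm i)
    rw [Equiv.apply_symm_apply] at this
    rw [← this]
    exact hmono (Fin.le_def.2 (by have := (σ.symm i).2; simp only; omega))
  have hm : ∀ i, i ≠ σ ⟨0, by omega⟩ → m ≤ lapEigs G i := by
    intro i hi
    have := hσ (σ.symm i)
    rw [Equiv.apply_symm_apply] at this
    rw [← this]
    refine hmono (Fin.le_def.2 ?_)
    by_contra hlt
    apply hi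
    rw [← Equiv.symm_apply_eq]
    ext
    simp only at hlt ⊢
    omega
  have hm0 : 0 ≤ m := by rw [hmdef, hσ]; exact lapEigs_nonneg G _
  have hM0 : 0 ≤ M := by rw [hMdef, hσ]; exact lapEigs_nonneg G _
  let H := G.induce ((↑S : Set (Fin n))ᶜ)
  have hcard : numComp G S = Fintype.card H.ConnectedComponent := Nat.card_eq_fintype_card
  have hone : 1 < Fintype.card H.ConnectedComponent := by omega
  obtain ⟨C, D, hCD⟩ := Fintype.one_lt_card_iff.1 hone
  -- representatives
  let r : H.ConnectedComponent → Fin n := fun K => (K.exists_rep.choose : Fin n)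
  have hr : ∀ K : H.ConnectedComponent, ∃ h : r K ∉ S, H.connectedComponentMk ⟨r K, h⟩ = K := by
    intro K
    exact ⟨K.exists_rep.choose.2, K.exists_rep.choose_spec⟩
  have hadjc : ∀ i j (hi : i ∉ S) (hj : j ∉ S), G.Adj i j →
      H.connectedComponentMk ⟨i, hi⟩ = H.connectedComponentMk ⟨j, hj⟩ := by
    intro i j hi hj hij
    apply ConnectedComponent.sound
    apply SimpleGraph.Adj.reachable
    exact hij
  have hrinj : Function.Injective r := by
    intro K K' h
    obtain ⟨h1, h2⟩ := hr K
    obtain ⟨h3, h4⟩ := hr K'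
    rw [← h2, ← h4]
    congr 2
  have hI := indep_bound G M hM (Finset.univ.image r) ⟨r C, by simp⟩ (by
    intro i hi j hj hij
    obtain ⟨K, -, rfl⟩ := Finset.mem_image.1 hi
    obtain ⟨K', -, rfl⟩ := Finset.mem_image.1 hj
    obtain ⟨h1, h2⟩ := hr K
    obtain ⟨h3, h4⟩ := hr K'
    have := hadjc _ _ h1 h3 hij
    rw [h2, h4] at this
    subst this
    exact G.loopless.irrefl _ hij)
  rw [Finset.card_image_of_injective _ hrinj, Finset.card_univ, ← hcard, Fintype.card_fin] at hI
  have hS : m ≤ S.card := by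
    refine sep_bound G m _ hm S
      (Finset.univ.filter fun i => ∃ h : i ∉ S, H.connectedComponentMk ⟨i, h⟩ = C) ?_ ?_ ?_ ?_
    · exact ⟨r C, by simpa using hr C⟩
    · rw [Finset.disjoint_left]
      intro i hi
      exact (Finset.mem_filter.1 hi).2.1
    · obtain ⟨h1, h2⟩ := hr D
      refine ⟨r D, ?_⟩
      simp only [Finset.mem_compl, Finset.mem_union, Finset.mem_filter, Finset.mem_univ, true_and,
        not_or]
      refine ⟨?_, h1⟩
      rintro ⟨h3, h4⟩
      exact hCD (h4.symm.trans h2)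
    · intro i j hij hi hj
      have := hadjc i j hi hj hij
      simp only [Finset.mem_filter, Finset.mem_univ, true_and, hi, hj, not_false_eq_true,
        exists_true_left, this]
  set d : ℝ := (n : ℝ) * (M - G.minDegree) with hd
  have hd0 : 0 ≤ d := le_trans (by positivity) hI
  have : M * m / d * numComp G S = m * (numComp G S * M / d) := by ring
  rw [this]
  have h1 : numComp G S * M / d ≤ 1 := div_le_one_of_le₀ hI hd0
  calc _ ≤ m * 1 := mul_le_mul_of_nonneg_left h1 hm0
    _ ≤ _ := by rw [mul_one]; exact hS
end

section
/- Let G be a non-complete simple graph achieving its toughness at a set S with c(G−S) = 2. Then t(G) ≥ μ_2/(μ_n − δ), where μ_2 and μ_n are the second smallest and largest Laplacian eigenvalues and δ the minimum degree. -/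
open SimpleGraph Matrix

namespace Tgh

/-- Laplacian quadratic form. -/
noncomputable def qf {V : Type*} [Fintype V] (G : SimpleGraph V) [DecidableRel G.Adj]
    (f : V → ℝ) : ℝ :=
  (∑ i : V, ∑ j : V, if G.Adj i j then (f i - f j) ^ 2 else 0) / 2

/-- Adjacency quadratic form. -/
noncomputable def af {V : Type*} [Fintype V] (G : SimpleGraph V) [DecidableRel G.Adj]
    (f : V → ℝ) : ℝ :=
  ∑ i : V, ∑ j : V, if G.Adj i j then f i * f j else 0

section spectral
variable {V : Type*} [Fintype V] [DecidableEq V] (G : SimpleGraph V) [DecidableRel G.Adj]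

lemma exists_coords : ∃ v : V → V → ℝ,
    (∀ i, G.lapMatrix ℝ *ᵥ v i = lapEigs G i • v i) ∧
    (∀ f g : V → ℝ, ∑ i, (v i ⬝ᵥ f) * (v i ⬝ᵥ g) = f ⬝ᵥ g) := by
  let hA := (SimpleGraph.posSemidef_lapMatrix ℝ G).1
  refine ⟨fun i => ⇑(hA.eigenvectorBasis i), fun i => hA.mulVec_eigenvectorBasis i, ?_⟩
  intro f g
  have := hA.eigenvectorBasis.sum_inner_mul_inner (WithLp.toLp 2 f) (WithLp.toLp 2 g)
  simp only [EuclideanSpace.inner_eq_star_dotProduct, star_trivial] at this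
  rw [dotProduct_comm f g, ← this]
  refine Finset.sum_congr rfl fun i _ => ?_
  rw [dotProduct_comm g]

lemma qf_eq (f : V → ℝ) : qf G f = f ⬝ᵥ (G.lapMatrix ℝ *ᵥ f) := by
  rw [← Matrix.toLinearMap₂'_apply', SimpleGraph.lapMatrix_toLinearMap₂']; rfl

lemma exists_coords' : ∃ v : V → V → ℝ,
    (∀ i, G.lapMatrix ℝ *ᵥ v i = lapEigs G i • v i) ∧
    (∀ f g : V → ℝ, ∑ i, (v i ⬝ᵥ f) * (v i ⬝ᵥ g) = f ⬝ᵥ g) ∧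
    (∀ f : V → ℝ, qf G f = ∑ i, lapEigs G i * (v i ⬝ᵥ f) ^ 2) ∧
    (∀ i, lapEigs G i * (v i ⬝ᵥ fun _ => 1) = 0) := by
  obtain ⟨v, h1, h2⟩ := exists_coords G
  have key : ∀ i (f : V → ℝ), v i ⬝ᵥ (G.lapMatrix ℝ *ᵥ f) = lapEigs G i * (v i ⬝ᵥ f) := by
    intro i f
    rw [dotProduct_mulVec, ← mulVec_transpose, (SimpleGraph.isSymm_lapMatrix (R := ℝ) G).eq, h1,
      smul_dotProduct, smul_eq_mul]
  refine ⟨v, h1, h2, ?_, ?_⟩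
  · intro f
    rw [qf_eq, ← h2]
    refine Finset.sum_congr rfl fun i _ => ?_
    rw [key]; ring
  · intro i
    rw [← key, SimpleGraph.lapMatrix_mulVec_const_eq_zero, dotProduct_zero]

lemma sq_dot (f : V → ℝ) : f ⬝ᵥ f = ∑ i, f i ^ 2 := by
  simp [dotProduct, sq]

lemma eigs_nonneg (i : V) : 0 ≤ lapEigs G i :=
  (SimpleGraph.posSemidef_lapMatrix ℝ G).eigenvalues_nonneg i

lemma qf_le (m : ℝ) (hm : ∀ i, lapEigs G i ≤ m) (f : V → ℝ) : qf G f ≤ m * ∑ i, f i ^ 2 := by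
  obtain ⟨v, h1, h2, h3, h4⟩ := exists_coords' G
  rw [h3, ← sq_dot, ← h2, Finset.mul_sum]
  refine Finset.sum_le_sum fun i _ => ?_
  nlinarith [mul_le_mul_of_nonneg_right (hm i) (sq_nonneg (v i ⬝ᵥ f))]

lemma le_qf (m : ℝ) (i0 : V) (hm : ∀ i, i ≠ i0 → m ≤ lapEigs G i) (f : V → ℝ)
    (hf : ∑ i, f i = 0) : m * ∑ i, f i ^ 2 ≤ qf G f := by
  rcases le_or_gt m 0 with h | hpos
  · refine le_trans (mul_nonpos_of_nonpos_of_nonneg h (by positivity)) ?_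
    unfold qf; positivity
  obtain ⟨v, h1, h2, h3, h4⟩ := exists_coords' G
  have hv : ∀ i, i ≠ i0 → (v i ⬝ᵥ fun _ => (1:ℝ)) = 0 := by
    intro i hi
    rcases mul_eq_zero.1 (h4 i) with h | h
    · have := hm i hi; linarith
    · exact h
  have h0 : v i0 ⬝ᵥ f = 0 := by
    have e1 := h2 (fun _ => 1) f
    have e2 := h2 (fun _ => 1) (fun _ => 1)
    rw [Finset.sum_eq_single i0 (by intro i _ hi; rw [hv i hi, zero_mul]) (by simp)] at e1 e2
    have e3 : ((fun _ => (1:ℝ)) ⬝ᵥ f) = 0 := by simpa [dotProduct] using hf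
    have e4 : ((fun _ : V => (1:ℝ)) ⬝ᵥ (fun _ => 1)) ≠ 0 := by
      have : Nonempty V := ⟨i0⟩
      simp [dotProduct]
    rw [e3] at e1
    rcases mul_eq_zero.1 e1 with h | h
    · rw [h, zero_mul] at e2; exact absurd e2.symm e4
    · exact h
  rw [h3, ← sq_dot, ← h2, Finset.mul_sum]
  refine Finset.sum_le_sum fun i _ => ?_
  by_cases hi : i = i0
  · subst hi; rw [h0]; simp
  · nlinarith [mul_le_mul_of_nonneg_right (hm i hi) (sq_nonneg (v i ⬝ᵥ f))]

lemma qf_regular (d : ℕ) (hd : ∀ v, G.degree v = d) (f : V → ℝ) :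
    qf G f = d * ∑ i, f i ^ 2 - af G f := by
  rw [qf_eq]
  unfold af
  rw [Finset.mul_sum, ← Finset.sum_sub_distrib]
  simp only [dotProduct, SimpleGraph.lapMatrix_mulVec_apply, hd, mul_sub]
  refine Finset.sum_congr rfl fun i _ => ?_
  rw [SimpleGraph.neighborFinset_eq_filter, Finset.sum_filter, Finset.mul_sum]
  simp only [mul_ite, mul_zero]
  ring

/-- Test vector supported on the image of an injective map. -/
lemma extend_vec {ι : Type*} [Fintype ι] (c : ι → V) (hc : Function.Injective c) (g : ι → ℝ) :
    ∃ f : V → ℝ, ∑ v, f v = ∑ i, g i ∧ ∑ v, f v ^ 2 = ∑ i, g i ^ 2 ∧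
      af G f = ∑ i, ∑ j, if G.Adj (c i) (c j) then g i * g j else 0 := by
  classical
  have hs : ∀ (F : V → ℝ), (∀ v, v ∉ Set.range c → F v = 0) → ∑ v, F v = ∑ i, F (c i) := by
    intro F hF
    rw [← Finset.sum_image (s := Finset.univ) (g := c) (f := F) (by intro a _ b _ h; exact hc h)]
    symm
    apply Finset.sum_subset (Finset.subset_univ _)
    intro v _ hv
    apply hF
    rintro ⟨i, rfl⟩
    exact hv (Finset.mem_image_of_mem _ (Finset.mem_univ _))
  let f : V → ℝ := Function.extend c g 0
  have f0 : ∀ v, v ∉ Set.range c → f v = 0 := by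
    intro v hv
    exact Function.extend_apply' _ _ _ (by simpa using hv)
  have f1 : ∀ i, f (c i) = g i := fun i => hc.extend_apply _ _ _
  refine ⟨f, ?_, ?_, ?_⟩
  · rw [hs f f0]; simp [f1]
  · rw [hs _ (by intro v hv; simp [f0 v hv])]; simp [f1]
  · unfold af
    rw [hs _ (by intro v hv; simp [f0 v hv])]
    refine Finset.sum_congr rfl fun i _ => ?_
    rw [hs _ (by intro v hv; simp [f0 v hv])]
    simp [f1]

/-- `μ_n ≥ d + 1`. -/
lemma degree_add_one_le (m : ℝ) (hm : ∀ f : V → ℝ, qf G f ≤ m * ∑ i, f i ^ 2) (v : V)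
    (hv : 0 < G.degree v) : (G.degree v : ℝ) + 1 ≤ m := by
  set d : ℝ := (G.degree v : ℝ) with hd
  have hdpos : 0 < d := by rw [hd]; exact_mod_cast hv
  let f : V → ℝ := fun i => if i = v then d else if G.Adj v i then -1 else 0
  have fv : f v = d := by simp [f]
  have fn : ∀ i, G.Adj v i → f i = -1 := by
    intro i hi
    have : i ≠ v := hi.ne'
    simp [f, this, hi]
  have dsum : ∑ i : V, (if G.Adj v i then (1:ℝ) else 0) = d := by
    rw [hd, SimpleGraph.degree_eq_sum_if_adj]
  have hsq : ∑ i, f i ^ 2 = d ^ 2 + d := by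
    have : ∀ i, f i ^ 2 = (if i = v then d ^ 2 else 0) + (if G.Adj v i then (1:ℝ) else 0) := by
      intro i
      by_cases h : i = v
      · subst h; simp [f]
      · by_cases h' : G.Adj v i <;> simp [f, h, h']
    simp only [this, Finset.sum_add_distrib, dsum]
    simp
  have hq : d * (d + 1) ^ 2 ≤ qf G f := by
    have : ∑ i : V, ∑ j : V, ((if i = v then (if G.Adj v j then (d + 1) ^ 2 else 0) else 0) +
        (if j = v then (if G.Adj v i then (d + 1) ^ 2 else 0) else 0)) ≤
        ∑ i : V, ∑ j : V, if G.Adj i j then (f i - f j) ^ 2 else 0 := by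
      refine Finset.sum_le_sum fun i _ => Finset.sum_le_sum fun j _ => ?_
      by_cases h : i = v
      · subst h
        by_cases h2 : j = i
        · subst h2; simp
        · by_cases h3 : G.Adj i j
          · simp [h2, h3, fv, fn]
          · simp [h2, h3]
      · by_cases h2 : j = v
        · subst h2
          by_cases h3 : G.Adj j i
          · simp only [h, h3, h3.symm, fv, fn i h3, if_true, if_false]
            nlinarith
          · simp [h, h3, G.adj_comm i j]
        · simp only [h, h2, if_false, add_zero]
          positivity
    have e : ∑ j : V, (if G.Adj v j then (d + 1) ^ 2 else 0) = d * (d + 1) ^ 2 := by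
      rw [← dsum, Finset.sum_mul]
      simp only [dsum, ite_mul, one_mul, zero_mul]
    simp only [Finset.sum_add_distrib, Finset.sum_ite_eq', Finset.mem_univ, if_true] at this
    rw [Finset.sum_comm] at this
    simp only [Finset.sum_ite_eq', Finset.mem_univ, if_true, e] at this
    unfold qf
    linarith
  have := hm f
  rw [hsq] at this
  have h3 : (d * (d + 1)) * (d + 1) ≤ (d * (d + 1)) * m := by nlinarith
  exact le_of_mul_le_mul_left h3 (by positivity)

end spectral

section lattice

/-- All nonzero dual vectors have norm at least one. -/
def DualBig {ι : Type} [Fintype ι] (A : Matrix ι ι ℝ) : Prop :=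
  ∀ y : ι → ℝ, y ≠ 0 → (∀ i, ∃ m : ℤ, (A *ᵥ y) i = m) → 1 ≤ y ⬝ᵥ (A *ᵥ y)

lemma step {ι : Type} [Fintype ι] [DecidableEq ι] (A : Matrix ι ι ℝ) (hA : Aᵀ = A)
    (hdet : 0 < A.det) (hP : DualBig A) (b : ι → ℝ) (hb : b ≠ 0) (hbi : ∀ i, ∃ m : ℤ, b i = m)
    (hpos : ∀ y : ι → ℝ, 0 < y ⬝ᵥ (A *ᵥ y) - 2 * (b ⬝ᵥ y) + 2) :
    let M := Matrix.fromBlocks A (Matrix.replicateCol Unit b) (Matrix.replicateRow Unit b)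
      (Matrix.of fun _ _ : Unit => (2:ℝ))
    DualBig M ∧ 0 < M.det ∧ M.det ≤ A.det := by
  intro M
  have hu : IsUnit A.det := hdet.ne'.isUnit
  set p := A⁻¹ *ᵥ b with hp
  have hAp : A *ᵥ p = b := by rw [hp, mulVec_mulVec, Matrix.mul_nonsing_inv _ hu, one_mulVec]
  have hp0 : p ≠ 0 := by
    intro h; apply hb; rw [← hAp, h, mulVec_zero]
  set c := b ⬝ᵥ p with hc
  have hpc : p ⬝ᵥ (A *ᵥ p) = c := by rw [hAp, hc, dotProduct_comm]
  have hc1 : 1 ≤ c := by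
    rw [← hpc]; exact hP p hp0 (by rw [hAp]; exact hbi)
  have hc2 : c < 2 := by
    have := hpos p
    rw [hpc] at this; linarith
  have hMd : M.det = A.det * (2 - c) := by
    let _ := Matrix.invertibleOfIsUnitDet A hu
    simp only [M]
    rw [Matrix.det_fromBlocks₁₁]
    congr 1
    rw [Matrix.det_unique, Matrix.sub_apply, Matrix.invOf_eq_nonsing_inv]
    congr 1
    rw [hc, hp, Matrix.mul_assoc, ← Matrix.replicateCol_mulVec, Matrix.replicateRow_mul_replicateCol_apply]
  refine ⟨?_, ?_, ?_⟩
  · intro y hy hint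
    set y1 : ι → ℝ := fun i => y (Sum.inl i) with hy1
    set t : ℝ := y (Sum.inr ()) with ht
    have hM1 : ∀ i, (M *ᵥ y) (Sum.inl i) = (A *ᵥ y1) i + b i * t := by
      intro i
      simp [M, mulVec, dotProduct, Fintype.sum_sum_type, hy1, ht]
    have hM2 : (M *ᵥ y) (Sum.inr ()) = b ⬝ᵥ y1 + 2 * t := by
      simp [M, mulVec, dotProduct, Fintype.sum_sum_type, hy1, ht]
    set u : ι → ℝ := y1 + t • p with hu'
    have hAu : ∀ i, (A *ᵥ u) i = (M *ᵥ y) (Sum.inl i) := by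
      intro i
      rw [hM1, hu', mulVec_add, mulVec_smul, hAp]
      simp; ring
    have hsym : y1 ⬝ᵥ b = b ⬝ᵥ y1 := dotProduct_comm _ _
    have hpA : p ⬝ᵥ (A *ᵥ y1) = b ⬝ᵥ y1 := by
      rw [dotProduct_mulVec, ← mulVec_transpose, hA, hAp]
    have hform : y ⬝ᵥ (M *ᵥ y) = u ⬝ᵥ (A *ᵥ u) + t ^ 2 * (2 - c) := by
      have e1 : y ⬝ᵥ (M *ᵥ y) = y1 ⬝ᵥ (A *ᵥ y1) + t * (b ⬝ᵥ y1) + t * (b ⬝ᵥ y1 + 2 * t) := by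
        have : y1 ⬝ᵥ (A *ᵥ y1) + t * (b ⬝ᵥ y1) = ∑ i, y1 i * ((A *ᵥ y1) i + b i * t) := by
          simp only [dotProduct, Finset.mul_sum, ← Finset.sum_add_distrib]
          refine Finset.sum_congr rfl fun i _ => by ring
        rw [this]
        conv_lhs => rw [dotProduct, Fintype.sum_sum_type]
        simp only [hM1, Finset.univ_unique, Finset.sum_singleton]
        congr 1
        exact congrArg (t * ·) hM2
      rw [e1, hu', mulVec_add, mulVec_smul, hAp, dotProduct_add, add_dotProduct, add_dotProduct,
        dotProduct_smul, dotProduct_smul, smul_dotProduct, smul_dotProduct, hpA, hsym,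
        dotProduct_comm p b, ← hc]
      simp only [smul_eq_mul]; ring
    rw [hform]
    by_cases hu0 : u = 0
    · have hy1' : y1 = -(t • p) := by
        rw [hu'] at hu0; exact eq_neg_of_add_eq_zero_left hu0
      have ht0 : t ≠ 0 := by
        intro h0
        apply hy
        funext x
        rcases x with i | x
        · have := congrFun hy1' i
          rw [h0] at this
          simpa [hy1] using this
        · exact h0
      obtain ⟨m, hm⟩ := hint (Sum.inr ())
      rw [hM2, hy1', dotProduct_neg, dotProduct_smul, ← hc, smul_eq_mul] at hm
      have hm' : t * (2 - c) = m := by rw [← hm]; ring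
      have hm0 : m ≠ 0 := by
        intro h; rw [h, Int.cast_zero] at hm'
        rcases mul_eq_zero.1 hm' with h | h
        · exact ht0 h
        · linarith
      have hm1 : (1:ℝ) ≤ (m:ℝ) ^ 2 := by
        have : (1:ℤ) ≤ m ^ 2 := by
          have := sq_nonneg m
          have h2 : m ^ 2 ≠ 0 := pow_ne_zero _ hm0
          omega
        exact_mod_cast this
      rw [← hm'] at hm1
      rw [hu0]
      simp only [zero_dotProduct, zero_add]
      have : (t * (2 - c)) ^ 2 ≤ t ^ 2 * (2 - c) := by
        have h1 : 0 ≤ t ^ 2 * (2 - c) := by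
          apply mul_nonneg (sq_nonneg _); linarith
        nlinarith
      linarith
    · have := hP u hu0 (by intro i; rw [hAu]; exact hint _)
      have h1 : 0 ≤ t ^ 2 * (2 - c) := by
          apply mul_nonneg (sq_nonneg _); linarith
      linarith
  · rw [hMd]; apply mul_pos hdet; linarith
  · rw [hMd]; nlinarith

/-- Adjacency plus twice the identity. -/
def mat {V : Type*} [DecidableEq V] (G : SimpleGraph V) [DecidableRel G.Adj]
    (R : Type*) [Ring R] : Matrix V V R := G.adjMatrix R + 2

variable {V : Type*} [Fintype V] [DecidableEq V] (G : SimpleGraph V) [DecidableRel G.Adj]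

lemma mat_apply (R : Type*) [Ring R] (i j : V) : mat G R i j =
    (if G.Adj i j then 1 else 0) + (if i = j then 2 else 0) := by
  have : (2 : Matrix V V R) i j = if i = j then 2 else 0 := by
    rw [← Matrix.diagonal_ofNat', Matrix.diagonal_apply]; rfl
  simp [mat, SimpleGraph.adjMatrix_apply, this]

lemma grow (hconn : G.Connected)
    (hpd : ∀ (ι : Type) [Fintype ι] (f : ι → V) (_ : Function.Injective f) (y : ι → ℝ), y ≠ 0 →
      0 < y ⬝ᵥ ((mat G ℝ).submatrix f f *ᵥ y)) :
    ∀ (k : ℕ) (ι : Type) [Fintype ι] [DecidableEq ι] [Nonempty ι] (f : ι → V)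
      (_ : Function.Injective f)
      (_ : Fintype.card ι + k = Fintype.card V)
      (_ : DualBig ((mat G ℝ).submatrix f f))
      (_ : 0 < ((mat G ℝ).submatrix f f).det), 
      (mat G ℝ).det ≤ ((mat G ℝ).submatrix f f).det ∧ 0 < (mat G ℝ).det := by
  intro k
  induction k with
  | zero =>
    intro ι _ _ _ f hf hc hP hd
    have hb : Function.Bijective f := (Fintype.bijective_iff_injective_and_card f).2 ⟨hf, by simpa using hc⟩
    have : ((mat G ℝ).submatrix f f).det = (mat G ℝ).det :=
      Matrix.det_submatrix_equiv_self (Equiv.ofBijective f hb) _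
    rw [this] at hd ⊢
    exact ⟨le_rfl, hd⟩
  | succ k ih =>
    intro ι _ _ _ f hf hc hP hd
    -- find a new adjacent vertex
    obtain ⟨w, hw, i0, hi0⟩ : ∃ w, w ∉ Set.range f ∧ ∃ i, G.Adj (f i) w := by
      by_contra hcon
      push Not at hcon
      have hcl : ∀ v, v ∈ Set.range f := by
        intro v
        obtain ⟨W⟩ := hconn.preconnected (f (Classical.arbitrary ι)) v
        have : ∀ a b, G.Walk a b → a ∈ Set.range f → b ∈ Set.range f := by
          intro a b W
          induction W with
          | nil => exact id
          | cons h _ ih =>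
            rintro ⟨i, rfl⟩
            apply ih
            by_contra hn
            exact hcon _ hn i h
        exact this _ _ W ⟨_, rfl⟩
      have := Fintype.card_le_of_surjective f hcl
      omega
    have hinj : Function.Injective (Sum.elim f (fun _ : Unit => w)) := by
      apply Function.Injective.sumElim hf (fun _ _ _ => rfl)
      intro a _ h
      exact hw ⟨a, h⟩
    have hne : ∀ i, f i ≠ w := fun i h => hw ⟨i, h⟩
    let b : ι → ℝ := fun i => if G.Adj (f i) w then 1 else 0
    have hM : (mat G ℝ).submatrix (Sum.elim f (fun _ : Unit => w)) (Sum.elim f (fun _ : Unit => w)) =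
        Matrix.fromBlocks ((mat G ℝ).submatrix f f) (Matrix.replicateCol Unit b)
          (Matrix.replicateRow Unit b) (Matrix.of fun _ _ : Unit => (2:ℝ)) := by
      ext x y
      rcases x with x | x <;> rcases y with y | y
      · simp
      · simp [mat_apply, b, hne]
      · simp [mat_apply, b, (hne _).symm, G.adj_comm]
      · simp [mat_apply]
    have hsymm : ((mat G ℝ).submatrix f f)ᵀ = (mat G ℝ).submatrix f f := by
      ext i j
      simp [mat_apply, G.adj_comm, eq_comm]
    have hs := step ((mat G ℝ).submatrix f f) hsymm hd hP b
      (by intro h; have := congrFun h i0; simp [b, hi0] at this)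
      (by intro i; by_cases h : G.Adj (f i) w
          · exact ⟨1, by simp [b, h]⟩
          · exact ⟨0, by simp [b, h]⟩)
      (by
        intro y
        have := hpd (ι ⊕ Unit) _ hinj (Sum.elim y (fun _ => -1))
          (by intro h; have := congrFun h (Sum.inr ()); simp at this)
        rw [hM, Matrix.fromBlocks_mulVec] at this
        simp only [dotProduct, Fintype.sum_sum_type, Sum.elim_inl, Sum.elim_inr, Pi.add_apply,
          Sum.elim_comp_inl, Sum.elim_comp_inr] at this
        have e : ∀ i, (Matrix.replicateCol Unit b *ᵥ (fun _ : Unit => (-1:ℝ))) i = - b i := by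
          intro i; simp [mulVec, dotProduct]
        have e2 : (Matrix.replicateRow Unit b *ᵥ y) () = b ⬝ᵥ y := by
          simp [mulVec, dotProduct]
        have e3 : ((Matrix.of fun _ _ : Unit => (2:ℝ)) *ᵥ (fun _ : Unit => (-1:ℝ))) () = -2 := by
          simp [mulVec, dotProduct]
        simp only [e, Finset.univ_unique, Finset.sum_singleton, PUnit.default_eq_unit, e2, e3, mul_add, Finset.sum_add_distrib] at this
        have e4 : ∑ i, y i * - b i = - (b ⬝ᵥ y) := by
          simp only [dotProduct, ← Finset.sum_neg_distrib]
          refine Finset.sum_congr rfl fun i _ => by ring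
        rw [e4] at this
        have e5 : y ⬝ᵥ ((mat G ℝ).submatrix f f *ᵥ y) = ∑ i, y i * ((mat G ℝ).submatrix f f *ᵥ y) i := rfl
        rw [e5]
        linarith)
    obtain ⟨s1, s2, s3⟩ := hs
    rw [← hM] at s1 s2 s3
    obtain ⟨r1, r2⟩ := ih (ι ⊕ Unit) _ hinj (by simp; omega) s1 s2
    exact ⟨r1.trans s3, r2⟩

/-- In a regular graph `d + 2` divides the determinant. -/
lemma deg_le_det (d : ℕ) (hd : ∀ v, G.degree v = d) [Nonempty V] (hpos : 0 < (mat G ℝ).det) :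
    (d : ℝ) + 2 ≤ (mat G ℝ).det := by
  have hmap : mat G ℝ = (mat G ℤ).map (Int.castRingHom ℝ) := by
    ext i j
    simp only [mat_apply, Matrix.map_apply]
    split_ifs <;> norm_num
  have hdet : (mat G ℝ).det = ((mat G ℤ).det : ℝ) := by
    rw [hmap, ← RingHom.mapMatrix_apply, ← RingHom.map_det]; rfl
  rw [hdet] at hpos ⊢
  have h1 : mat G ℤ *ᵥ (fun _ => 1) = fun _ => ((d:ℤ) + 2) := by
    funext i
    simp only [mulVec, dotProduct, mat_apply, mul_one, Finset.sum_add_distrib]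
    rw [← SimpleGraph.degree_eq_sum_if_adj, hd]
    simp
  have h2 : (mat G ℤ).adjugate *ᵥ (mat G ℤ *ᵥ (fun _ => 1)) = fun _ => (mat G ℤ).det := by
    rw [mulVec_mulVec, Matrix.adjugate_mul, smul_mulVec, one_mulVec]
    funext i; simp
  rw [h1] at h2
  have h3 := congrFun h2 (Classical.arbitrary V)
  simp only [mulVec, dotProduct, ← Finset.sum_mul] at h3
  have hp : 0 < (mat G ℤ).det := by exact_mod_cast hpos
  have : (d:ℤ) + 2 ≤ (mat G ℤ).det := Int.le_of_dvd hp ⟨_, by rw [← h3, mul_comm]⟩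
  exact_mod_cast this

end lattice

section cyc
variable {V : Type*} [Fintype V] [DecidableEq V] (G : SimpleGraph V) [DecidableRel G.Adj]

lemma fin_succ_iff {l : ℕ} [NeZero l] (hl : 2 ≤ l) (i j : Fin l) :
    j = i + 1 ↔ (j.val = i.val + 1 ∨ (i.val + 1 = l ∧ j.val = 0)) := by
  have h1 : (1 : Fin l).val = 1 := by
    rw [Fin.val_one', Nat.mod_eq_of_lt (by omega)]
  rw [Fin.ext_iff, Fin.val_add, h1]
  have := i.isLt
  have := j.isLt
  rcases Nat.lt_or_ge (i.val + 1) l with h | h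
  · rw [Nat.mod_eq_of_lt h]; omega
  · have : i.val + 1 = l := by omega
    rw [this, Nat.mod_self]; omega

lemma ofNat_succ' {l : ℕ} [NeZero l] (k : ℕ) : Fin.ofNat l (k + 1) = Fin.ofNat l k + 1 := by
  apply Fin.ext
  simp [Fin.val_add, Fin.ofNat]

lemma fin_all {l : ℕ} [NeZero l] (P : Fin l → Prop) (i0 : Fin l) (h0 : P i0)
    (hs : ∀ i, P i → P (i + 1)) : ∀ i, P i := by
  have : ∀ k : ℕ, P (i0 + Fin.ofNat l k) := by
    intro k
    induction k with
    | zero =>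
      have : Fin.ofNat l 0 = 0 := rfl
      rw [this, add_zero]; exact h0
    | succ k ih =>
      have := hs _ ih
      rwa [add_assoc, ← ofNat_succ'] at this
  intro i
  have h := this (i - i0).val
  have e : Fin.ofNat l (i - i0).val = i - i0 := Fin.ext (Nat.mod_eq_of_lt (i - i0).isLt)
  rwa [e, add_sub_cancel] at h

/-- The vertex-edge incidence matrix of the cycle. -/
def bm (l : ℕ) [NeZero l] : Matrix (Fin l) (Fin l) ℝ :=
  Matrix.of fun i j => (if i = j then 1 else 0) + (if i + 1 = j then 1 else 0)

lemma fin_one_ne {l : ℕ} [NeZero l] (hl : 2 ≤ l) (i : Fin l) : i + 1 ≠ i := by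
  intro h
  rw [eq_comm, fin_succ_iff hl] at h
  omega

lemma bm_det {l : ℕ} [NeZero l] (hl : 2 ≤ l) : |(bm l).det| ≤ 2 := by
  classical
  have hb : ∀ i j, 0 ≤ bm l i j ∧ bm l i j ≤ 1 := by
    intro i j
    simp only [bm, Matrix.of_apply]
    by_cases h : i = j
    · subst h; simp [fin_one_ne hl]
    · by_cases h2 : i + 1 = j <;> simp [h, h2]
  have hz : ∀ σ : Equiv.Perm (Fin l), σ ∉ ({1, Equiv.subRight 1} : Finset (Equiv.Perm (Fin l))) →
      Equiv.Perm.sign σ • ∏ i, bm l (σ i) i = 0 := by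
    intro σ hσ
    suffices h : ∏ i, bm l (σ i) i = 0 by rw [h, smul_zero]
    by_contra hne
    rw [← ne_eq, Finset.prod_ne_zero_iff] at hne
    have hor : ∀ i, σ i = i ∨ σ i + 1 = i := by
      intro i
      by_contra hcon
      push Not at hcon
      apply hne i (Finset.mem_univ _)
      simp [bm, hcon]
    apply hσ
    simp only [Finset.mem_insert, Finset.mem_singleton]
    by_cases hex : ∃ i, σ i = i
    · left
      obtain ⟨i0, hi0⟩ := hex
      ext1 i
      refine fin_all (fun i => σ i = i) i0 hi0 ?_ i
      intro i hi
      rcases hor (i + 1) with h | h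
      · exact h
      · exfalso
        have h2 : σ (i + 1) = i := add_right_cancel h
        exact fin_one_ne hl i (σ.injective (h2.trans hi.symm))
    · right
      push Not at hex
      ext1 i
      have := (hor i).resolve_left (hex i)
      simp only [Equiv.subRight_apply]
      exact eq_sub_of_add_eq this
  rw [Matrix.det_apply, ← Finset.sum_subset (Finset.subset_univ _) (fun σ _ h => hz σ h)]
  refine (Finset.abs_sum_le_sum_abs _ _).trans ?_
  have h1 : ∀ σ : Equiv.Perm (Fin l), |Equiv.Perm.sign σ • ∏ i, bm l (σ i) i| ≤ 1 := by
    intro σ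
    have h2 : |∏ i, bm l (σ i) i| ≤ 1 := by
      rw [abs_of_nonneg (Finset.prod_nonneg fun i _ => (hb _ _).1)]
      exact Finset.prod_le_one (fun i _ => (hb _ _).1) (fun i _ => (hb _ _).2)
    rcases Int.units_eq_one_or (Equiv.Perm.sign σ) with h | h
    · simpa [h] using h2
    · simpa [h] using h2
  refine (Finset.sum_le_card_nsmul _ _ 1 (fun σ _ => h1 σ)).trans ?_
  have : (Finset.card ({1, Equiv.subRight 1} : Finset (Equiv.Perm (Fin l)))) ≤ 2 := Finset.card_le_two
  simpa using (by exact_mod_cast this :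
    ((Finset.card ({1, Equiv.subRight 1} : Finset (Equiv.Perm (Fin l))) : ℕ) : ℝ) ≤ 2)

lemma cyc_mat {l : ℕ} [NeZero l] (hl : 4 ≤ l) (c : Fin l → V) (hc : Function.Injective c)
    (hadj : ∀ i j, G.Adj (c i) (c j) ↔ (j = i + 1 ∨ i = j + 1)) :
    (mat G ℝ).submatrix c c = (bm l)ᵀ * bm l := by
  ext j k
  rw [Matrix.submatrix_apply, mat_apply, Matrix.mul_apply]
  have e : ∀ x : Fin l, (bm l)ᵀ j x * bm l x k =
      (if x = j then (if j = k then 1 else 0) + (if j + 1 = k then 1 else 0) else 0) +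
      (if x = j - 1 then (if j = k + 1 then 1 else 0) + (if j = k then 1 else 0) else 0) := by
    intro x
    have h1 : (x + 1 = j) ↔ x = j - 1 := eq_sub_iff_add_eq.symm
    simp only [bm, Matrix.transpose_apply, Matrix.of_apply, h1, add_mul, ite_mul, one_mul, zero_mul]
    congr 1
    · by_cases h : x = j
      · subst h; simp
      · simp [h]
    · by_cases h : x = j - 1
      · subst h; simp [sub_eq_iff_eq_add]
      · simp [h]
  simp only [e, Finset.sum_add_distrib, Finset.sum_ite_eq', Finset.mem_univ, if_true]
  have hx : ¬ (k = j + 1 ∧ j = k + 1) := by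
    rw [fin_succ_iff (by omega), fin_succ_iff (by omega)]; omega
  have hy : ¬ (k = j ∧ j = k + 1) := by
    rw [fin_succ_iff (by omega)]; omega
  have hz : ¬ (k = j ∧ k = j + 1) := by
    rw [fin_succ_iff (by omega)]; omega
  have aux : ∀ (P Q R : Prop) [Decidable P] [Decidable Q] [Decidable R],
      ¬ (P ∧ Q) → ¬ (R ∧ Q) → ¬ (R ∧ P) →
      (if P ∨ Q then (1:ℝ) else 0) + (if R then 2 else 0) =
      (if R then 1 else 0) + (if P then 1 else 0) + ((if Q then 1 else 0) + (if R then 1 else 0)) := by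
    intro P Q R _ _ _ h1 h2 h3
    by_cases hP : P <;> by_cases hQ : Q <;> by_cases hR : R <;> simp_all <;> norm_num
  have := aux _ _ _ hx hy hz
  simp only [hc.eq_iff, hadj]
  simp only [eq_comm (a := j + 1), eq_comm (a := j) (b := k)]
  exact this

lemma bm_mulVec {l : ℕ} [NeZero l] (y : Fin l → ℝ) (i : Fin l) :
    (bm l *ᵥ y) i = y i + y (i + 1) := by
  simp [bm, mulVec, dotProduct, add_mul, Finset.sum_add_distrib]

lemma bmT_mulVec {l : ℕ} [NeZero l] (y : Fin l → ℝ) (i : Fin l) :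
    ((bm l)ᵀ *ᵥ y) (i + 1) = y (i + 1) + y i := by
  simp [bm, mulVec, dotProduct, add_mul, Finset.sum_add_distrib]

lemma btb_form {l : ℕ} [NeZero l] (y : Fin l → ℝ) :
    y ⬝ᵥ (((bm l)ᵀ * bm l) *ᵥ y) = ∑ i, ((bm l *ᵥ y) i) ^ 2 := by
  rw [← mulVec_mulVec, dotProduct_mulVec, ← mulVec_transpose, Matrix.transpose_transpose]
  simp [dotProduct, sq]

lemma cyc_odd {l : ℕ} [NeZero l] (hl : 4 ≤ l)
    (hpd : ∀ y : Fin l → ℝ, y ≠ 0 → 0 < y ⬝ᵥ (((bm l)ᵀ * bm l) *ᵥ y)) : Odd l := by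
  by_contra hodd
  rw [Nat.not_odd_iff_even] at hodd
  have := hpd (fun i => (-1) ^ i.val) (by
    intro h; have := congrFun h 0; simp at this)
  rw [btb_form] at this
  apply this.ne
  symm
  apply Finset.sum_eq_zero
  intro i _
  rw [bm_mulVec]
  have h := (fin_succ_iff (by omega) i (i + 1)).1 rfl
  rcases h with h | ⟨h, h'⟩
  · rw [h, pow_succ]; ring
  · rw [h']
    have : Odd i.val := by
      rcases Nat.even_or_odd i.val with h1 | h1
      · exfalso
        have := h1.add_one
        rw [h] at this
        exact (Nat.not_odd_iff_even.2 hodd) this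
      · exact h1
    rw [this.neg_one_pow]; norm_num

lemma cyc_dual {l : ℕ} [NeZero l] (hl : 4 ≤ l) (hodd : Odd l)
    (hpd : ∀ y : Fin l → ℝ, y ≠ 0 → 0 < y ⬝ᵥ (((bm l)ᵀ * bm l) *ᵥ y)) :
    DualBig ((bm l)ᵀ * bm l) := by
  intro y hy hint
  have hpos := hpd y hy
  rw [btb_form] at hpos ⊢
  set v := bm l *ᵥ y with hv
  have hv1 : ∀ i, ∃ m : ℤ, v (i + 1) + v i = m := by
    intro i
    obtain ⟨m, hm⟩ := hint (i + 1)
    rw [← mulVec_mulVec, bmT_mulVec] at hm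
    exact ⟨m, hm⟩
  have hk : ∀ (k : ℕ) (j : Fin l), ∃ m : ℤ, v (j + Fin.ofNat l k) = (-1) ^ k * v j + m := by
    intro k j
    induction k with
    | zero =>
      have : Fin.ofNat l 0 = 0 := rfl
      exact ⟨0, by rw [this]; simp⟩
    | succ k ih =>
      obtain ⟨m, hm⟩ := ih
      obtain ⟨m', hm'⟩ := hv1 (j + Fin.ofNat l k)
      refine ⟨m' - m, ?_⟩
      rw [ofNat_succ', ← add_assoc, pow_succ]
      push_cast
      linarith
  have h2 : ∀ j, ∃ m : ℤ, 2 * v j = m := by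
    intro j
    obtain ⟨m, hm⟩ := hk l j
    have e : Fin.ofNat l l = 0 := Fin.ext (by simp [Fin.ofNat])
    rw [hodd.neg_one_pow, e, add_zero] at hm
    exact ⟨m, by linarith⟩
  by_cases hI : ∃ j, ∃ m : ℤ, v j = m
  · obtain ⟨j0, hj0⟩ := hI
    have hall : ∀ j, ∃ m : ℤ, v j = m := by
      refine fin_all _ j0 hj0 ?_
      rintro i ⟨m, hm⟩
      obtain ⟨m', hm'⟩ := hv1 i
      exact ⟨m' - m, by push_cast; linarith⟩
    choose z hz using hall
    have : (0:ℝ) < ((∑ i, z i ^ 2 : ℤ) : ℝ) := by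
      push_cast
      simpa [hz] using hpos
    have h3 : (1:ℤ) ≤ ∑ i, z i ^ 2 := by exact_mod_cast this
    have h4 : (1:ℝ) ≤ ((∑ i, z i ^ 2 : ℤ) : ℝ) := by exact_mod_cast h3
    push_cast at h4
    simpa [hz] using h4
  · push Not at hI
    have hq : ∀ j, (1/4 : ℝ) ≤ v j ^ 2 := by
      intro j
      obtain ⟨m, hm⟩ := h2 j
      have hm0 : m ≠ 0 := by
        rintro rfl
        exact hI j 0 (by push_cast at hm ⊢; linarith)
      have : (1:ℤ) ≤ m ^ 2 := by
        have := sq_nonneg m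
        have h2 : m ^ 2 ≠ 0 := pow_ne_zero _ hm0
        omega
      have : (1:ℝ) ≤ (m:ℝ) ^ 2 := by exact_mod_cast this
      rw [← hm] at this
      nlinarith
    have := Finset.sum_le_sum (fun j (_ : j ∈ Finset.univ) => hq j)
    simp only [Finset.sum_const, Finset.card_univ, Fintype.card_fin, nsmul_eq_mul] at this
    have h4 : (4:ℝ) ≤ l := by exact_mod_cast hl
    linarith

/-- A regular connected graph with least eigenvalue `> -2` having an induced cycle of length at
least four is of degree at most two, and the cycle has length at least five. -/
lemma cyc_main (hconn : G.Connected) (d : ℕ) (hd : ∀ v, G.degree v = d)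
    (hpd : ∀ f : V → ℝ, f ≠ 0 → 0 < af G f + 2 * ∑ v, f v ^ 2)
    (l : ℕ) (hl : 4 ≤ l) (c : ℕ → V) (hinj : ∀ i j, i < j → j < l → c i ≠ c j)
    (hadj : ∀ i j, i < j → j < l → (G.Adj (c i) (c j) ↔ (j = i + 1 ∨ (i = 0 ∧ j + 1 = l)))) :
    d ≤ 2 ∧ 5 ≤ l := by
  have : NeZero l := ⟨by omega⟩
  have hpd' : ∀ (ι : Type) [Fintype ι] (f : ι → V) (_ : Function.Injective f) (y : ι → ℝ), y ≠ 0 →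
      0 < y ⬝ᵥ ((mat G ℝ).submatrix f f *ᵥ y) := by
    intro ι _ f hf y hy
    classical
    obtain ⟨F, -, hF2, hF3⟩ := extend_vec G f hf y
    have hF : F ≠ 0 := by
      rintro rfl
      obtain ⟨i, hi⟩ := Function.ne_iff.1 hy
      have h0 : 0 < ∑ i, y i ^ 2 :=
        Finset.sum_pos' (fun i _ => sq_nonneg _) ⟨i, Finset.mem_univ _, by
          have : y i ≠ 0 := hi
          positivity⟩
      rw [← hF2] at h0
      simp at h0
    have h := hpd F hF
    rw [hF2, hF3, Finset.mul_sum, ← Finset.sum_add_distrib] at h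
    refine h.trans_eq ?_
    simp only [dotProduct, mulVec, Matrix.submatrix_apply, mat_apply, hf.eq_iff, add_mul, ite_mul,
      one_mul, zero_mul, Finset.sum_add_distrib, Finset.sum_ite_eq, Finset.mem_univ, if_true, mul_add,
      Finset.mul_sum, mul_ite, mul_zero]
    congr 1
    exact Finset.sum_congr rfl fun i _ => by ring
  let c' : Fin l → V := fun i => c i
  have hc' : Function.Injective c' := by
    intro i j h
    rcases lt_trichotomy i.val j.val with h1 | h1 | h1
    · exact absurd h (hinj _ _ h1 j.isLt)
    · exact Fin.ext h1
    · exact absurd h.symm (hinj _ _ h1 i.isLt)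
  have hadj' : ∀ i j, G.Adj (c' i) (c' j) ↔ (j = i + 1 ∨ i = j + 1) := by
    intro i j
    rw [fin_succ_iff (by omega), fin_succ_iff (by omega)]
    have := i.isLt
    have := j.isLt
    rcases lt_trichotomy i.val j.val with h1 | h1 | h1
    · rw [hadj _ _ h1 j.isLt]; omega
    · have : i = j := Fin.ext h1
      subst this
      simp only [SimpleGraph.irrefl, false_iff]; omega
    · rw [G.adj_comm, hadj _ _ h1 i.isLt]; omega
  have hM := cyc_mat G hl c' hc' hadj'
  have hpdc := hpd' (Fin l) c' hc'
  rw [hM] at hpdc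
  have hodd := cyc_odd hl hpdc
  have hdual := cyc_dual hl hodd hpdc
  have hdet : ((bm l)ᵀ * bm l).det = (bm l).det ^ 2 := by
    rw [Matrix.det_mul, Matrix.det_transpose, sq]
  have hdet0 : 0 < ((bm l)ᵀ * bm l).det := by
    rcases (sq_nonneg (bm l).det).lt_or_eq with h | h
    · rw [hdet]; exact h
    · exfalso
      rw [← hdet] at h
      obtain ⟨y, hy, hy2⟩ := Matrix.exists_mulVec_eq_zero_iff.2 h.symm
      have := hpdc y hy
      rw [hy2, dotProduct_zero] at this
      exact lt_irrefl _ this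
  have hle := Fintype.card_le_of_injective c' hc'
  rw [← hM] at hdual hdet0
  obtain ⟨r1, r2⟩ := grow G hconn hpd' (Fintype.card V - Fintype.card (Fin l)) (Fin l) c' hc'
    (by omega) hdual hdet0
  have : Nonempty V := ⟨c 0⟩
  have h3 := deg_le_det G d hd r2
  rw [hM, hdet] at r1
  have h4 := bm_det (l := l) (by omega)
  have h5 : (bm l).det ^ 2 ≤ 4 := by
    rw [← sq_abs]; nlinarith [abs_nonneg (bm l).det]
  constructor
  · have : (d:ℝ) ≤ 2 := by linarith
    exact_mod_cast this
  · rcases hodd with ⟨k, hk⟩; omega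

end cyc

section sep
variable {V : Type*} [Fintype V] [DecidableEq V] (G : SimpleGraph V) [DecidableRel G.Adj]

/-- `A`, `B`, `S` partition the vertices and there is no edge between `A` and `B`. -/
structure Sep (A B S : Finset V) : Prop where
  neA : A.Nonempty
  neB : B.Nonempty
  cov : ∀ v, v ∈ A ∨ v ∈ B ∨ v ∈ S
  dAB : ∀ v ∈ A, v ∉ B
  dAS : ∀ v ∈ A, v ∉ S
  dBS : ∀ v ∈ B, v ∉ S
  nadj : ∀ i ∈ A, ∀ j ∈ B, ¬ G.Adj i j

/-- number of edges between `X` and `Y` -/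
noncomputable def ec (X Y : Finset V) : ℝ :=
  ∑ i : V, ∑ j : V, if i ∈ X ∧ j ∈ Y ∧ G.Adj i j then 1 else 0

variable {G}

lemma Sep.symm {A B S : Finset V} (h : Sep G A B S) : Sep G B A S :=
  ⟨h.neB, h.neA, fun v => by have := h.cov v; tauto, fun v hv hv' => h.dAB v hv' hv, h.dBS, h.dAS,
    fun i hi j hj hij => h.nadj j hj i hi hij.symm⟩

lemma Sep.sum {A B S : Finset V} (h : Sep G A B S) (F : V → ℝ) (p q r : ℝ)
    (hA : ∀ v ∈ A, F v = p) (hS : ∀ v ∈ S, F v = q) (hB : ∀ v ∈ B, F v = r) :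
    ∑ v, F v = A.card * p + S.card * q + B.card * r := by
  have : ∀ v, F v = (if v ∈ A then p else 0) + (if v ∈ S then q else 0) + (if v ∈ B then r else 0) := by
    intro v
    rcases h.cov v with hv | hv | hv
    · simp [hv, h.dAB v hv, h.dAS v hv, hA v hv]
    · have h1 : v ∉ A := fun h' => h.dAB v h' hv
      simp [hv, h1, h.dBS v hv, hB v hv]
    · have h1 : v ∉ A := fun h' => h.dAS v h' hv
      have h2 : v ∉ B := fun h' => h.dBS v h' hv
      simp [hv, h1, h2, hS v hv]
  simp only [this, Finset.sum_add_distrib, Finset.sum_ite_mem, Finset.univ_inter, Finset.sum_const,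
    nsmul_eq_mul]

lemma Sep.qf {A B S : Finset V} (h : Sep G A B S) (F : V → ℝ) (p q r : ℝ)
    (hA : ∀ v ∈ A, F v = p) (hS : ∀ v ∈ S, F v = q) (hB : ∀ v ∈ B, F v = r) :
    Tgh.qf G F = ec G A S * (p - q) ^ 2 + ec G B S * (r - q) ^ 2 := by
  have key : ∀ i j, (if G.Adj i j then (F i - F j) ^ 2 else 0) =
      (if i ∈ A ∧ j ∈ S ∧ G.Adj i j then 1 else 0) * (p - q) ^ 2 +
      (if j ∈ A ∧ i ∈ S ∧ G.Adj j i then 1 else 0) * (p - q) ^ 2 +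
      (if i ∈ B ∧ j ∈ S ∧ G.Adj i j then 1 else 0) * (r - q) ^ 2 +
      (if j ∈ B ∧ i ∈ S ∧ G.Adj j i then 1 else 0) * (r - q) ^ 2 := by
    intro i j
    simp only [G.adj_comm j i]
    by_cases hij : G.Adj i j
    · have cases : ∀ v, (v ∈ A ∧ v ∉ B ∧ v ∉ S ∧ F v = p) ∨ (v ∉ A ∧ v ∈ B ∧ v ∉ S ∧ F v = r) ∨
          (v ∉ A ∧ v ∉ B ∧ v ∈ S ∧ F v = q) := by
        intro v
        have h1 := h.dAB v
        have h2 := h.dAS v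
        have h3 := h.dBS v
        rcases h.cov v with hv | hv | hv
        · exact Or.inl ⟨hv, h1 hv, h2 hv, hA v hv⟩
        · exact Or.inr (Or.inl ⟨fun h => h1 h hv, hv, h3 hv, hB v hv⟩)
        · exact Or.inr (Or.inr ⟨fun h => h2 h hv, fun h => h3 h hv, hv, hS v hv⟩)
      rcases cases i with ⟨a1, a2, a3, a4⟩ | ⟨a1, a2, a3, a4⟩ | ⟨a1, a2, a3, a4⟩ <;>
      rcases cases j with ⟨b1, b2, b3, b4⟩ | ⟨b1, b2, b3, b4⟩ | ⟨b1, b2, b3, b4⟩ <;>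
      first
      | exact absurd hij (h.nadj i a1 j b2)
      | exact absurd hij.symm (h.nadj j b1 i a2)
      | (simp [a1, a2, a3, a4, b1, b2, b3, b4, hij]; done)
      | (simp [a1, a2, a3, a4, b1, b2, b3, b4, hij]; ring)
    · simp [hij]
  unfold Tgh.qf
  simp only [key, Finset.sum_add_distrib, ← Finset.sum_mul]
  rw [Finset.sum_comm (f := fun i j => if j ∈ A ∧ i ∈ S ∧ G.Adj j i then (1:ℝ) else 0),
    Finset.sum_comm (f := fun i j => if j ∈ B ∧ i ∈ S ∧ G.Adj j i then (1:ℝ) else 0)]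
  unfold ec
  ring

lemma Sep.exists_fun {A B S : Finset V} (h : Sep G A B S) (p q r : ℝ) : ∃ F : V → ℝ,
    (∀ v ∈ A, F v = p) ∧ (∀ v ∈ S, F v = q) ∧ (∀ v ∈ B, F v = r) := by
  refine ⟨fun v => if v ∈ A then p else if v ∈ S then q else r, ?_, ?_, ?_⟩
  · intro v hv; simp [hv]
  · intro v hv
    have h1 : v ∉ A := fun h' => h.dAS v h' hv
    simp [hv, h1]
  · intro v hv
    have h1 : v ∉ A := fun h' => h.dAB v h' hv
    simp [h.dBS v hv, h1]

lemma Sep.test {A B S : Finset V} (h : Sep G A B S) (m : ℝ)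
    (hm : ∀ f : V → ℝ, ∑ i, f i = 0 → m * ∑ i, f i ^ 2 ≤ Tgh.qf G f) (p q r : ℝ)
    (h0 : A.card * p + S.card * q + B.card * r = 0) :
    m * (A.card * p ^ 2 + S.card * q ^ 2 + B.card * r ^ 2) ≤
      ec G A S * (p - q) ^ 2 + ec G B S * (r - q) ^ 2 := by
  obtain ⟨F, hA, hS, hB⟩ := h.exists_fun p q r
  have := hm F (by rw [h.sum F p q r hA hS hB, h0])
  rwa [h.qf F p q r hA hS hB, h.sum (fun v => F v ^ 2) (p ^ 2) (q ^ 2) (r ^ 2)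
    (fun v hv => by rw [hA v hv]) (fun v hv => by rw [hS v hv]) (fun v hv => by rw [hB v hv])] at this

lemma ec_le (X Y : Finset V) : ec G X Y ≤ X.card * Y.card := by
  have : ∀ i j : V, (if i ∈ X ∧ j ∈ Y ∧ G.Adj i j then (1:ℝ) else 0) ≤
      (if i ∈ X then 1 else 0) * (if j ∈ Y then 1 else 0) := by
    intro i j
    by_cases h1 : i ∈ X <;> by_cases h2 : j ∈ Y <;> by_cases h3 : G.Adj i j <;> simp [h1, h2, h3]
  refine (Finset.sum_le_sum fun i _ => Finset.sum_le_sum fun j _ => this i j).trans ?_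
  simp [← Finset.mul_sum, ← Finset.sum_mul]

/-- Fiedler: `μ₂ ≤ |S|`. -/
lemma Sep.fiedler {A B S : Finset V} (h : Sep G A B S) (m : ℝ)
    (hm : ∀ f : V → ℝ, ∑ i, f i = 0 → m * ∑ i, f i ^ 2 ≤ Tgh.qf G f) : m ≤ S.card := by
  have ha : (0:ℝ) < A.card := by exact_mod_cast h.neA.card_pos
  have hb : (0:ℝ) < B.card := by exact_mod_cast h.neB.card_pos
  have := h.test m hm (B.card:ℝ) 0 (-(A.card:ℝ)) (by ring)
  have h1 := ec_le (G := G) A S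
  have h2 := ec_le (G := G) B S
  set a : ℝ := (A.card : ℝ)
  set b : ℝ := (B.card : ℝ)
  set s : ℝ := (S.card : ℝ)
  have h3 : m * (a * b * (a + b)) ≤ s * (a * b * (a + b)) := by
    have e1 : ec G A S * b ^ 2 ≤ a * s * b ^ 2 := mul_le_mul_of_nonneg_right h1 (by positivity)
    have e2 : ec G B S * a ^ 2 ≤ b * s * a ^ 2 := mul_le_mul_of_nonneg_right h2 (by positivity)
    nlinarith
  exact le_of_mul_le_mul_right h3 (by positivity)

/-- Clique case, one order of the sides. -/
lemma Sep.half {A B S : Finset V} (h : Sep G A B S) (m : ℝ) (hm0 : 0 ≤ m)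
    (hm : ∀ f : V → ℝ, ∑ i, f i = 0 → m * ∑ i, f i ^ 2 ≤ Tgh.qf G f)
    (hab : A.card ≤ B.card) (he : ec G A S + ec G B S ≤ S.card * A.card) : 2 * m ≤ S.card := by
  have ha : (0:ℝ) < A.card := by exact_mod_cast h.neA.card_pos
  have hb : (0:ℝ) < B.card := by exact_mod_cast h.neB.card_pos
  have hs : (0:ℝ) ≤ S.card := by positivity
  have hab' : (A.card : ℝ) ≤ B.card := by exact_mod_cast hab
  have t1 := h.test m hm (B.card:ℝ) 0 (-(A.card:ℝ)) (by ring)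
  have t2 := h.test m hm (-(B.card:ℝ)) (-(B.card:ℝ)) ((A.card:ℝ) + S.card) (by ring)
  set a : ℝ := (A.card : ℝ)
  set b : ℝ := (B.card : ℝ)
  set s : ℝ := (S.card : ℝ)
  set x := ec G A S
  set y := ec G B S
  -- t2 : m * b * (a+s) * n ≤ y * n^2
  have hn : 0 < a + s + b := by positivity
  have t3 : m * (b * (a + s)) ≤ y * (a + s + b) := by
    have : (m * (b * (a + s))) * (a + s + b) ≤ (y * (a + s + b)) * (a + s + b) := by nlinarith
    exact le_of_mul_le_mul_right this hn
  have t4 : m * (a * b) ≤ y * (a + b) := by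
    -- from t3 : (a+s)/(a+s+b) ≥ a/(a+b)
    have h1 : (m * (a * b)) * (a + s + b) ≤ (m * (b * (a + s))) * (a + b) := by
      have : 0 ≤ m * (b * b * s) := by positivity
      nlinarith
    have h2 : (m * (b * (a + s))) * (a + b) ≤ (y * (a + s + b)) * (a + b) :=
      mul_le_mul_of_nonneg_right t3 (by positivity)
    have h3 : (m * (a * b)) * (a + s + b) ≤ (y * (a + b)) * (a + s + b) := by linarith
    exact le_of_mul_le_mul_right h3 hn
  have t5 : m * (a * b) * (b - a) ≤ y * (a + b) * (b - a) :=
    mul_le_mul_of_nonneg_right t4 (by linarith)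
  have t6 : (x + y) * b ^ 2 ≤ s * a * b ^ 2 := mul_le_mul_of_nonneg_right he (by positivity)
  have t7 : (2 * m) * (a * b ^ 2) ≤ s * (a * b ^ 2) := by nlinarith
  exact le_of_mul_le_mul_right t7 (by positivity)

lemma Sep.deg_lt {A B S : Finset V} (h : Sep G A B S) (d : ℕ) (hd : ∀ v, G.degree v = d) :
    d + 1 ≤ A.card + S.card := by
  obtain ⟨x, hx⟩ := h.neA
  have hsub : insert x (G.neighborFinset x) ⊆ A ∪ S := by
    intro y hy
    rw [Finset.mem_insert] at hy
    rcases hy with rfl | hy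
    · exact Finset.mem_union_left _ hx
    · rw [SimpleGraph.mem_neighborFinset] at hy
      rcases h.cov y with h1 | h1 | h1
      · exact Finset.mem_union_left _ h1
      · exact absurd hy (h.nadj x hx y h1)
      · exact Finset.mem_union_right _ h1
  have h1 := Finset.card_le_card hsub
  rw [Finset.card_insert_of_notMem (by simp), SimpleGraph.card_neighborFinset_eq_degree, hd] at h1
  exact h1.trans (Finset.card_union_le _ _)

lemma Sep.ec_clique {A B S : Finset V} (h : Sep G A B S) (d : ℕ) (hd : ∀ v, G.degree v = d)
    (hcl : ∀ u ∈ S, ∀ v ∈ S, u ≠ v → G.Adj u v) : ec G A S + ec G B S ≤ S.card * A.card := by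
  have hda := h.deg_lt d hd
  have e1 : ec G A S + ec G B S = ∑ j : V, if j ∈ S then ((G.neighborFinset j \ S).card : ℝ) else 0 := by
    unfold ec
    rw [Finset.sum_comm, Finset.sum_comm (f := fun i j => if i ∈ B ∧ j ∈ S ∧ G.Adj i j then (1:ℝ) else 0),
      ← Finset.sum_add_distrib]
    refine Finset.sum_congr rfl fun j _ => ?_
    rw [← Finset.sum_add_distrib]
    by_cases hj : j ∈ S
    · rw [if_pos hj, Finset.card_eq_sum_ones, Nat.cast_sum, ← Finset.sum_filter_add_sum_filter_not Finset.univ (fun i => i ∈ G.neighborFinset j \ S)]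
      rw [Finset.filter_mem_eq_inter, Finset.univ_inter]
      rw [Finset.sum_eq_zero (s := Finset.filter (fun i => ¬ i ∈ G.neighborFinset j \ S) Finset.univ), add_zero]
      · refine Finset.sum_congr rfl fun i hi => ?_
        rw [Finset.mem_sdiff, SimpleGraph.mem_neighborFinset] at hi
        have hc := h.cov i
        by_cases hA : i ∈ A
        · simp [hA, h.dAB i hA, hj, hi.1.symm]
        · have hB : i ∈ B := by tauto
          simp [hA, hB, hj, hi.1.symm]
      · intro i hi
        simp only [Finset.mem_filter, Finset.mem_univ, true_and, Finset.mem_sdiff,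
          SimpleGraph.mem_neighborFinset, not_and, not_not] at hi
        by_cases hij : G.Adj i j
        · have hs := hi hij.symm
          have h1 : i ∉ A := fun h' => h.dAS i h' hs
          have h2 : i ∉ B := fun h' => h.dBS i h' hs
          simp [h1, h2]
        · simp [hij]
    · simp [hj]
  rw [e1, Finset.sum_ite_mem, Finset.univ_inter, ← nsmul_eq_mul]
  apply Finset.sum_le_card_nsmul
  intro u hu
  have hsub : S.erase u ⊆ G.neighborFinset u ∩ S := by
    intro v hv
    rw [Finset.mem_erase] at hv
    rw [Finset.mem_inter, SimpleGraph.mem_neighborFinset]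
    exact ⟨hcl u hu v hv.2 hv.1.symm, hv.2⟩
  have h1 := Finset.card_le_card hsub
  have h2 := Finset.card_sdiff_add_card_inter (G.neighborFinset u) S
  rw [SimpleGraph.card_neighborFinset_eq_degree, hd] at h2
  rw [Finset.card_erase_of_mem hu] at h1
  have : (G.neighborFinset u \ S).card ≤ A.card := by omega
  exact_mod_cast this

lemma Sep.clique {A B S : Finset V} (h : Sep G A B S) (m : ℝ) (hm0 : 0 ≤ m)
    (hm : ∀ f : V → ℝ, ∑ i, f i = 0 → m * ∑ i, f i ^ 2 ≤ Tgh.qf G f)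
    (d : ℕ) (hd : ∀ v, G.degree v = d)
    (hcl : ∀ u ∈ S, ∀ v ∈ S, u ≠ v → G.Adj u v) : 2 * m ≤ S.card := by
  rcases le_total A.card B.card with hab | hab
  · exact h.half m hm0 hm hab (h.ec_clique d hd hcl)
  · exact h.symm.half m hm0 hm hab (h.symm.ec_clique d hd hcl)

end sep
section comp
variable {V : Type*}

/-- The restriction of `G` to the edges inside `W`, on the same vertex type. -/
def R (G : SimpleGraph V) (W : Set V) : SimpleGraph V where
  Adj i j := G.Adj i j ∧ i ∈ W ∧ j ∈ W
  symm := ⟨fun _ _ h => ⟨h.1.symm, h.2.2, h.2.1⟩⟩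
  loopless := ⟨fun _ h => G.loopless.irrefl _ h.1⟩

lemma R_mono (G : SimpleGraph V) {W W' : Set V} (h : W ⊆ W') : R G W ≤ R G W' :=
  fun _ _ hij => ⟨hij.1, h hij.2.1, h hij.2.2⟩

lemma comp_reach (G : SimpleGraph V) (T : Set V) (W : Set V) (c : (G.induce T).ConnectedComponent)
    (hW : ∀ v : T, (G.induce T).connectedComponentMk v = c → (v : V) ∈ W) (x y : T)
    (hx : (G.induce T).connectedComponentMk x = c) (w : (G.induce T).Walk x y) :
    (R G W).Reachable x y := by
  induction w with
  | nil => exact Reachable.refl _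
  | cons h p ih =>
    rename_i a b e
    have hb : (G.induce T).connectedComponentMk b = c := by
      rw [← hx]; exact (ConnectedComponent.eq.2 h.reachable).symm
    have hadj : (R G W).Adj a b := ⟨h, hW _ hx, hW _ hb⟩
    exact hadj.reachable.trans (ih hb)

lemma path_lemma (G : SimpleGraph V) (A : Set V) (hA : ∀ x ∈ A, ∀ y ∈ A, (R G A).Reachable x y)
    (u v : V) (hu : u ∉ A) (hv : v ∉ A) (huv : u ≠ v) (hnadj : ¬ G.Adj u v)
    (hu' : ∃ x ∈ A, G.Adj u x) (hv' : ∃ x ∈ A, G.Adj v x) :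
    ∃ (P : ℕ → V) (p : ℕ), 2 ≤ p ∧ P 0 = u ∧ P p = v ∧ (∀ i, 0 < i → i < p → P i ∈ A) ∧
      (∀ i j, i < j → j ≤ p → P i ≠ P j) ∧ (∀ i j, i < j → j ≤ p → (G.Adj (P i) (P j) ↔ j = i + 1)) := by
  obtain ⟨x, hx, hux⟩ := hu'
  obtain ⟨y, hy, hvy⟩ := hv'
  set W : Set V := A ∪ {u, v} with hW
  have hAW : A ⊆ W := Set.subset_union_left
  have huW : u ∈ W := by simp [hW]
  have hvW : v ∈ W := by simp [hW]
  have hr : (R G W).Reachable u v := by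
    have h1 : (R G W).Adj u x := ⟨hux, huW, hAW hx⟩
    have h2 : (R G W).Adj v y := ⟨hvy, hvW, hAW hy⟩
    exact h1.reachable.trans (((hA x hx y hy).mono (R_mono G hAW)).trans h2.reachable.symm)
  obtain ⟨w, hw⟩ := hr.exists_walk_length_eq_dist
  have hlen : ∀ i j, i ≤ j → j ≤ w.length → ∀ r : (R G W).Walk (w.getVert i) (w.getVert j),
      j - i ≤ r.length := by
    intro i j hij hj r
    have h1 := SimpleGraph.dist_le ((w.take i).append (r.append (w.drop j)))
    rw [Walk.length_append, Walk.length_append, Walk.take_length, Walk.drop_length, ← hw,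
      min_eq_left (hij.trans hj)] at h1
    omega
  have hne : ∀ i j, i < j → j ≤ w.length → w.getVert i ≠ w.getVert j := by
    intro i j hij hj he
    have := hlen i j hij.le hj (Walk.nil.copy rfl he)
    simp at this
    omega
  have hp0 : w.length ≠ 0 := fun h => huv (Walk.eq_of_length_eq_zero h)
  have hmem : ∀ i, i ≤ w.length → w.getVert i ∈ W := by
    intro i hi
    rcases hi.lt_or_eq with h | h
    · exact (w.adj_getVert_succ h).2.1
    · rw [h, Walk.getVert_length]; exact hvW
  have hadj : ∀ i j, i < j → j ≤ w.length → (G.Adj (w.getVert i) (w.getVert j) ↔ j = i + 1) := by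
    intro i j hij hj
    constructor
    · intro h
      have h' : (R G W).Adj (w.getVert i) (w.getVert j) := ⟨h, hmem i (hij.le.trans hj), hmem j hj⟩
      have := hlen i j hij.le hj h'.toWalk
      simp at this
      omega
    · rintro rfl
      exact (w.adj_getVert_succ (by omega)).1
  refine ⟨w.getVert, w.length, ?_, Walk.getVert_zero _, Walk.getVert_length _, ?_, hne, hadj⟩
  · by_contra hlt
    have h1 : w.length = 1 := by omega
    have := (hadj 0 1 (by omega) (by omega)).2 rfl
    have e : w.getVert 1 = v := by rw [← h1]; exact Walk.getVert_length _
    rw [Walk.getVert_zero, e] at this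
    exact hnadj this
  · intro i h0 hi
    have h1 := hne 0 i h0 hi.le
    have h2 := hne i w.length hi le_rfl
    rw [Walk.getVert_zero] at h1
    rw [Walk.getVert_length] at h2
    have := hmem i hi.le
    simp only [hW, Set.mem_union, Set.mem_insert_iff, Set.mem_singleton_iff] at this
    rcases this with h | h | h
    · exact h
    · exact absurd h.symm h1
    · exact absurd h h2

variable [Fintype V] [DecidableEq V] (G : SimpleGraph V) [DecidableRel G.Adj]

lemma exists_sep (S : Finset V) (h : numComp G S = 2) : ∃ A B : Finset V, Sep G A B S ∧
    (∀ x ∈ A, ∀ y ∈ A, (R G (A : Set V)).Reachable x y) ∧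
    (∀ x ∈ B, ∀ y ∈ B, (R G (B : Set V)).Reachable x y) := by
  classical
  unfold numComp at h
  obtain ⟨T, hT⟩ : ∃ T : Set V, T = ((S : Set V))ᶜ := ⟨_, rfl⟩
  rw [← hT, Nat.card_eq_two_iff] at h
  obtain ⟨c, e, hce, huniv⟩ := h
  let K : (G.induce T).ConnectedComponent → Finset V := fun c =>
    Finset.univ.filter fun v => ∃ h : v ∈ T, (G.induce T).connectedComponentMk ⟨v, h⟩ = c
  have hK : ∀ c v, v ∈ K c ↔ ∃ h : v ∈ T, (G.induce T).connectedComponentMk ⟨v, h⟩ = c := by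
    intro c v; simp [K]
  have hne : ∀ c, (K c).Nonempty := by
    intro c
    induction c using ConnectedComponent.ind with
    | h v => exact ⟨v, (hK _ _).2 ⟨v.2, rfl⟩⟩
  have hconn : ∀ c, ∀ x ∈ K c, ∀ y ∈ K c, (R G (K c : Set V)).Reachable x y := by
    intro c x hx y hy
    obtain ⟨hx1, hx2⟩ := (hK _ _).1 hx
    obtain ⟨hy1, hy2⟩ := (hK _ _).1 hy
    obtain ⟨w⟩ := ConnectedComponent.exact (hx2.trans hy2.symm)
    exact comp_reach G T (K c) c (fun v hv => Finset.mem_coe.2 ((hK _ _).2 ⟨v.2, hv⟩)) ⟨x, hx1⟩ ⟨y, hy1⟩ hx2 w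
  have hdS : ∀ c, ∀ v ∈ K c, v ∉ S := by
    intro c v hv
    obtain ⟨h1, -⟩ := (hK _ _).1 hv
    simpa [hT] using h1
  refine ⟨K c, K e, ⟨hne c, hne e, ?_, ?_, hdS c, hdS e, ?_⟩, hconn c, hconn e⟩
  · intro v
    by_cases hv : v ∈ S
    · exact Or.inr (Or.inr hv)
    · have hvT : v ∈ T := by simpa [hT] using hv
      have : (G.induce T).connectedComponentMk ⟨v, hvT⟩ ∈ ({c, e} : Set _) := by rw [huniv]; trivial
      rcases this with h | h
      · exact Or.inl ((hK _ _).2 ⟨hvT, h⟩)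
      · exact Or.inr (Or.inl ((hK _ _).2 ⟨hvT, h⟩))
  · intro v h1 h2
    obtain ⟨_, a⟩ := (hK _ _).1 h1
    obtain ⟨_, b⟩ := (hK _ _).1 h2
    exact hce (a.symm.trans b)
  · intro i hi j hj hij
    obtain ⟨i1, a⟩ := (hK _ _).1 hi
    obtain ⟨j1, b⟩ := (hK _ _).1 hj
    have : (G.induce T).Adj ⟨i, i1⟩ ⟨j, j1⟩ := hij
    exact hce (a.symm.trans ((ConnectedComponent.eq.2 this.reachable).trans b))

lemma walk_stay (H : SimpleGraph V) (X : Set V) (hX : ∀ i ∈ X, ∀ j, H.Adj i j → j ∈ X) {x y : V}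
    (w : H.Walk x y) (hx : x ∈ X) : y ∈ X := by
  induction w with
  | nil => exact hx
  | cons h p ih => exact ih (hX _ hx _ h)

lemma two_le (T X Y : Finset V) (h : Sep G X Y T) : 2 ≤ numComp G T := by
  classical
  by_contra hlt
  unfold numComp at hlt
  obtain ⟨x, hx⟩ := h.neA
  obtain ⟨y, hy⟩ := h.neB
  have hx' : x ∈ ((T : Set V))ᶜ := by simpa using h.dAS x hx
  have hy' : y ∈ ((T : Set V))ᶜ := by simpa using h.dBS y hy
  have hs : Subsingleton (G.induce ((T : Set V))ᶜ).ConnectedComponent := by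
    rw [← Finite.card_le_one_iff_subsingleton]; omega
  obtain ⟨w⟩ := ConnectedComponent.exact (hs.elim
    ((G.induce ((T : Set V))ᶜ).connectedComponentMk ⟨x, hx'⟩)
    ((G.induce ((T : Set V))ᶜ).connectedComponentMk ⟨y, hy'⟩))
  have := walk_stay (G.induce ((T : Set V))ᶜ) {v | (v : V) ∈ X} (by
    intro i hi j hij
    rcases h.cov j with h1 | h1 | h1
    · exact h1
    · exact absurd hij (h.nadj i hi j h1)
    · exact absurd (Finset.mem_coe.2 h1) j.2) w hx
  exact h.dAB y this hy

end comp
section final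
variable {V : Type*} [Fintype V] [DecidableEq V] (G : SimpleGraph V) [DecidableRel G.Adj]

lemma cyc_vec (d : ℕ) (hd : ∀ v, G.degree v = d) (hd2 : d ≤ 2) (l : ℕ) (hl : 5 ≤ l) (c : ℕ → V)
    (hinj : ∀ i j, i < j → j < l → c i ≠ c j)
    (hadj : ∀ i j, i < j → j < l → (G.Adj (c i) (c j) ↔ (j = i + 1 ∨ (i = 0 ∧ j + 1 = l))))
    (m M : ℝ) (hm : ∀ f : V → ℝ, ∑ i, f i = 0 → m * ∑ i, f i ^ 2 ≤ qf G f)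
    (hM : ∀ f : V → ℝ, qf G f ≤ M * ∑ i, f i ^ 2) : 10 * m ≤ 14 ∧ 140 ≤ 99 * (M - d) := by
  have hcinj : ∀ k : ℕ, k ≤ l → Function.Injective (fun i : Fin k => c i) := by
    intro k hk i j hij
    rcases lt_trichotomy (i : ℕ) (j : ℕ) with h | h | h
    · exact absurd hij (hinj _ _ h (by omega))
    · exact Fin.ext h
    · exact absurd hij.symm (hinj _ _ h (by omega))
  have hd2' : (d : ℝ) ≤ 2 := by exact_mod_cast hd2
  have a01 : G.Adj (c 0) (c 1) := (hadj 0 1 (by omega) (by omega)).2 (by omega)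
  have a12 : G.Adj (c 1) (c 2) := (hadj 1 2 (by omega) (by omega)).2 (by omega)
  have a23 : G.Adj (c 2) (c 3) := (hadj 2 3 (by omega) (by omega)).2 (by omega)
  have a34 : G.Adj (c 3) (c 4) := (hadj 3 4 (by omega) (by omega)).2 (by omega)
  have a02 : ¬ G.Adj (c 0) (c 2) := fun h => by
    have := (hadj 0 2 (by omega) (by omega)).1 h; omega
  have a03 : ¬ G.Adj (c 0) (c 3) := fun h => by
    have := (hadj 0 3 (by omega) (by omega)).1 h; omega
  have a13 : ¬ G.Adj (c 1) (c 3) := fun h => by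
    have := (hadj 1 3 (by omega) (by omega)).1 h; omega
  have a14 : ¬ G.Adj (c 1) (c 4) := fun h => by
    have := (hadj 1 4 (by omega) (by omega)).1 h; omega
  have a24 : ¬ G.Adj (c 2) (c 4) := fun h => by
    have := (hadj 2 4 (by omega) (by omega)).1 h; omega
  constructor
  · obtain ⟨f, f1, f2, f3⟩ := extend_vec G (fun i : Fin 5 => c i) (hcinj 5 (by omega))
      ![1, 2, 0, -2, -1]
    have h1 : ∑ i, f i = 0 := by rw [f1]; simp [Fin.sum_univ_five]
    have h2 : ∑ i, f i ^ 2 = 10 := by rw [f2]; simp [Fin.sum_univ_five]; norm_num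
    have h3 : 6 ≤ af G f := by
      rw [f3]
      by_cases a04 : G.Adj (c 0) (c 4)
      · simp [Fin.sum_univ_five, a01, a12, a23, a34, a02, a03, a13, a14, a24, a04, a01.symm,
          a12.symm, a23.symm, a34.symm, a04.symm, G.adj_comm (c 2) (c 0), G.adj_comm (c 3) (c 0),
          G.adj_comm (c 3) (c 1), G.adj_comm (c 4) (c 1), G.adj_comm (c 4) (c 2)]
        norm_num
      · simp [Fin.sum_univ_five, a01, a12, a23, a34, a02, a03, a13, a14, a24, a04, a01.symm,
          a12.symm, a23.symm, a34.symm, G.adj_comm (c 2) (c 0), G.adj_comm (c 3) (c 0),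
          G.adj_comm (c 3) (c 1), G.adj_comm (c 4) (c 1), G.adj_comm (c 4) (c 2),
          G.adj_comm (c 4) (c 0)]
        norm_num
    have h4 := hm f h1
    rw [qf_regular G d hd, h2] at h4
    linarith
  · obtain ⟨f, f1, f2, f3⟩ := extend_vec G (fun i : Fin 3 => c i) (hcinj 3 (by omega))
      ![-5, 7, -5]
    have h2 : ∑ i, f i ^ 2 = 99 := by rw [f2]; simp [Fin.sum_univ_three]; norm_num
    have h3 : af G f = -140 := by
      rw [f3]
      simp [Fin.sum_univ_three, a01, a12, a02, a01.symm, a12.symm, G.adj_comm (c 2) (c 0)]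
      norm_num
    have h4 := hM f
    rw [qf_regular G d hd, h2, h3] at h4
    linarith

lemma exists_cyc {A B S : Finset V} (h : Sep G A B S)
    (hA : ∀ x ∈ A, ∀ y ∈ A, (R G (A : Set V)).Reachable x y)
    (hB : ∀ x ∈ B, ∀ y ∈ B, (R G (B : Set V)).Reachable x y)
    (hSA : ∀ u ∈ S, ∃ x ∈ A, G.Adj u x) (hSB : ∀ u ∈ S, ∃ x ∈ B, G.Adj u x)
    (u v : V) (hu : u ∈ S) (hv : v ∈ S) (huv : u ≠ v) (hnadj : ¬ G.Adj u v) :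
    ∃ (l : ℕ) (c : ℕ → V), 4 ≤ l ∧ (∀ i j, i < j → j < l → c i ≠ c j) ∧
    (∀ i j, i < j → j < l → (G.Adj (c i) (c j) ↔ (j = i + 1 ∨ (i = 0 ∧ j + 1 = l)))) := by
  have nA : ∀ w ∈ S, w ∉ A := fun w hw hw' => h.dAS w hw' hw
  have nB : ∀ w ∈ S, w ∉ B := fun w hw hw' => h.dBS w hw' hw
  obtain ⟨P, p, hp, P0, Pp, Pin, Pinj, Padj⟩ := path_lemma G (A : Set V) hA u v
    (by simpa using nA u hu) (by simpa using nA v hv) huv hnadj (hSA u hu) (hSA v hv)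
  obtain ⟨Q, q, hq, Q0, Qq, Qin, Qinj, Qadj⟩ := path_lemma G (B : Set V) hB v u
    (by simpa using nB v hv) (by simpa using nB u hu) huv.symm (fun h => hnadj h.symm)
    (hSB v hv) (hSB u hu)
  have PnB : ∀ i, i ≤ p → P i ∉ B := by
    intro i hi
    rcases Nat.eq_zero_or_pos i with h0 | h0
    · rw [h0, P0]; exact nB u hu
    · rcases hi.lt_or_eq with h1 | h1
      · exact h.dAB _ (Pin i h0 h1)
      · rw [h1, Pp]; exact nB v hv
  refine ⟨p + q, fun i => if i ≤ p then P i else Q (i - p), by omega, ?_, ?_⟩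
  · intro i j hij hj
    by_cases hi' : i ≤ p <;> by_cases hj' : j ≤ p
    · simp only [hi', hj', if_true]
      exact Pinj i j hij hj'
    · simp only [hi', hj', if_true, if_false]
      intro he
      have := Qin (j - p) (by omega) (by omega)
      rw [← he] at this
      exact PnB i hi' this
    · omega
    · simp only [hi', hj', if_false]
      exact Qinj _ _ (by omega) (by omega)
  · intro i j hij hj
    by_cases hi' : i ≤ p <;> by_cases hj' : j ≤ p
    · simp only [hi', hj', if_true]
      rw [Padj i j hij hj']
      omega
    · simp only [hi', hj', if_true, if_false]
      rcases Nat.eq_zero_or_pos i with h0 | h0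
      · rw [h0, P0, ← Qq, G.adj_comm, Qadj _ _ (by omega) le_rfl]
        omega
      · rcases hi'.lt_or_eq with h1 | h1
        · have n := h.nadj _ (Pin i h0 h1) _ (Qin (j - p) (by omega) (by omega))
          constructor
          · intro h'; exact absurd h' n
          · intro h'; omega
        · rw [h1, Pp, ← Q0, Qadj _ _ (by omega) (by omega)]
          omega
    · omega
    · simp only [hi', hj', if_false]
      rw [Qadj _ _ (by omega) (by omega)]
      omega

lemma core {A B S : Finset V} (h : Sep G A B S) (hconn : G.Connected)
    (hA : ∀ x ∈ A, ∀ y ∈ A, (R G (A : Set V)).Reachable x y)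
    (hB : ∀ x ∈ B, ∀ y ∈ B, (R G (B : Set V)).Reachable x y)
    (hSA : ∀ u ∈ S, ∃ x ∈ A, G.Adj u x) (hSB : ∀ u ∈ S, ∃ x ∈ B, G.Adj u x)
    (m M : ℝ) (hm0 : 0 ≤ m) (hm : ∀ f : V → ℝ, ∑ i, f i = 0 → m * ∑ i, f i ^ 2 ≤ qf G f)
    (hM : ∀ f : V → ℝ, qf G f ≤ M * ∑ i, f i ^ 2) (d : ℕ) (hd : ∀ v, d ≤ G.degree v) :
    0 < M - d ∧ 2 * m ≤ S.card * (M - d) := by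
  obtain ⟨x, hx⟩ := h.neA
  obtain ⟨y, hy⟩ := h.neB
  have hnt : Nontrivial V := ⟨x, y, fun e => h.dAB x hx (e ▸ hy)⟩
  have hM1 : ∀ v, (G.degree v : ℝ) + 1 ≤ M := fun v =>
    degree_add_one_le G M hM v (hconn.preconnected.degree_pos_of_nontrivial v)
  have hs0 : (0:ℝ) ≤ S.card := by positivity
  have hdx : (d : ℝ) ≤ G.degree x := by exact_mod_cast hd x
  have hl1 : 1 ≤ M - d := by have := hM1 x; linarith
  refine ⟨by linarith, ?_⟩
  have hF := h.fiedler m hm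
  by_cases h2 : 2 ≤ M - d
  · nlinarith
  push Not at h2
  have hreg : ∀ v, G.degree v = d := by
    intro v
    have h1 := hM1 v
    have h3 : (G.degree v : ℝ) < d + 1 := by linarith
    have h4 : G.degree v < d + 1 := by exact_mod_cast h3
    have := hd v
    omega
  by_cases hcl : ∀ u ∈ S, ∀ v ∈ S, u ≠ v → G.Adj u v
  · have := h.clique m hm0 hm d hreg hcl
    nlinarith
  push Not at hcl
  obtain ⟨u, hu, v, hv, huv, hnadj⟩ := hcl
  obtain ⟨l, c, hl, hinj, hadj⟩ := exists_cyc G h hA hB hSA hSB u v hu hv huv hnadj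
  have hpd : ∀ f : V → ℝ, f ≠ 0 → 0 < af G f + 2 * ∑ i, f i ^ 2 := by
    intro f hf
    have h1 := hM f
    rw [qf_regular G d hreg] at h1
    have h3 : 0 < ∑ i, f i ^ 2 := by
      obtain ⟨i, hi⟩ := Function.ne_iff.1 hf
      exact Finset.sum_pos' (fun _ _ => sq_nonneg _) ⟨i, Finset.mem_univ _, by
        have : f i ≠ 0 := hi
        positivity⟩
    nlinarith
  obtain ⟨hd2, hl5⟩ := cyc_main G hconn d hreg hpd l hl c hinj hadj
  obtain ⟨e1, e2⟩ := cyc_vec G d hreg hd2 l hl5 c hinj hadj m M hm hM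
  have hs2 : (2:ℝ) ≤ S.card := by
    have : 2 ≤ S.card := Finset.one_lt_card.2 ⟨u, hu, v, hv, huv⟩
    exact_mod_cast this
  nlinarith

lemma sep_empty (hnc : ¬ G.Connected) [Nonempty V] : ∃ X Y : Finset V, Sep G X Y ∅ := by
  classical
  have : ¬ G.Preconnected := fun h => hnc ⟨h⟩
  unfold SimpleGraph.Preconnected at this
  push Not at this
  obtain ⟨x, y, hxy⟩ := this
  refine ⟨Finset.univ.filter fun v => G.Reachable x v, Finset.univ.filter fun v => ¬ G.Reachable x v,
    ⟨⟨x, by simp⟩, ⟨y, by simpa using hxy⟩, ?_, ?_, by simp, by simp, ?_⟩⟩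
  · intro v
    by_cases h : G.Reachable x v <;> simp [h]
  · intro v hv; simpa using hv
  · intro i hi j hj hij
    simp only [Finset.mem_filter, Finset.mem_univ, true_and] at hi hj
    exact hj (hi.trans hij.reachable)

variable {G} in
lemma Sep.erase {A B S : Finset V} (h : Sep G A B S) (u : V) (hu : u ∈ S)
    (hn : ∀ x ∈ A, ¬ G.Adj u x) : Sep G A (insert u B) (S.erase u) where
  neA := h.neA
  neB := Finset.insert_nonempty _ _
  cov := fun v => by
    by_cases e : v = u
    · right; left; simp [e]
    · rcases h.cov v with h1 | h1 | h1 <;> simp [h1, e]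
  dAB := fun v hv => by
    have h1 : v ≠ u := fun e => h.dAS v hv (e ▸ hu)
    simp [h1, h.dAB v hv]
  dAS := fun v hv => by simp [h.dAS v hv]
  dBS := fun v hv => by
    rw [Finset.mem_insert] at hv
    rcases hv with rfl | hv
    · simp
    · simp [h.dBS v hv]
  nadj := fun i hi j hj => by
    rw [Finset.mem_insert] at hj
    rcases hj with rfl | hj
    · exact fun h' => hn i hi h'.symm
    · exact h.nadj i hi j hj

end final
end Tgh

theorem stmt8 {n : ℕ} [NeZero n] (hn : 2 ≤ n) (G : SimpleGraph (Fin n)) [DecidableRel G.Adj]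
    (hnc : G ≠ ⊤) (μ : Fin n → ℝ) (hμ : IsLapSpectrum G μ)
    (S : Finset (Fin n)) (hdis : numComp G S = 2)
    (hmin : ∀ T : Finset (Fin n), 2 ≤ numComp G T →
      (S.card : ℝ) / numComp G S ≤ (T.card : ℝ) / numComp G T) :
    μ ⟨1, by omega⟩ / (μ ⟨n - 1, by omega⟩ - G.minDegree) ≤ (S.card : ℝ) / numComp G S := by
  obtain ⟨hmono, σ, hσ⟩ := hμ
  obtain ⟨A, B, h, hA, hB⟩ := Tgh.exists_sep G S hdis
  have hm : ∀ f : Fin n → ℝ, ∑ i, f i = 0 → μ ⟨1, by omega⟩ * ∑ i, f i ^ 2 ≤ Tgh.qf G f := by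
    intro f hf
    refine Tgh.le_qf G _ (σ ⟨0, by omega⟩) ?_ f hf
    intro i hi
    obtain ⟨k, rfl⟩ := σ.surjective i
    rw [← hσ]
    apply hmono
    have : k ≠ ⟨0, by omega⟩ := fun e => hi (by rw [e])
    rw [Fin.le_def]
    have : (k : ℕ) ≠ 0 := fun e => this (Fin.ext e)
    show 1 ≤ (k : ℕ)
    omega
  have hM : ∀ f : Fin n → ℝ, Tgh.qf G f ≤ μ ⟨n - 1, by omega⟩ * ∑ i, f i ^ 2 := by
    intro f
    refine Tgh.qf_le G _ ?_ f
    intro i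
    obtain ⟨k, rfl⟩ := σ.surjective i
    rw [← hσ]
    apply hmono
    rw [Fin.le_def]
    show (k : ℕ) ≤ n - 1
    omega
  have hm0 : 0 ≤ μ ⟨1, by omega⟩ := by rw [hσ]; exact Tgh.eigs_nonneg G _
  rw [hdis] at hmin ⊢
  rcases hm0.eq_or_lt with h0 | h0
  · rw [← h0, zero_div]; positivity
  have hF := h.fiedler _ hm
  have hspos : (0:ℝ) < S.card := lt_of_lt_of_le h0 hF
  have hconn : G.Connected := by
    by_contra hc
    obtain ⟨X, Y, hXY⟩ := Tgh.sep_empty G hc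
    have := hmin ∅ (Tgh.two_le G _ _ _ hXY)
    rw [Finset.card_empty, Nat.cast_zero, zero_div] at this
    push_cast at this
    linarith
  have key : ∀ X Y : Finset (Fin n), Tgh.Sep G X Y S → ∀ u ∈ S, ∃ x ∈ X, G.Adj u x := by
    intro X Y hXY u hu
    by_contra hc
    push Not at hc
    have h2 := Tgh.two_le G _ _ _ (hXY.erase u hu hc)
    have h1 := hmin _ h2
    have h3 : ((S.erase u).card : ℝ) = S.card - 1 := by
      have := Finset.card_erase_add_one hu
      rw [← this]; push_cast; ring
    have h2' : (2:ℝ) ≤ numComp G (S.erase u) := by exact_mod_cast h2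
    rw [div_le_div_iff₀ (by norm_num) (by linarith), h3] at h1
    push_cast at h1
    nlinarith
  obtain ⟨c1, c2⟩ := Tgh.core G h hconn hA hB (key A B h) (key B A h.symm) _ _ hm0 hm hM G.minDegree
    (fun v => G.minDegree_le_degree v)
  rw [div_le_div_iff₀ c1 (by norm_num)]
  push_cast
  linarith
end

section
/- Let G be a non-complete simple graph and r ≥ 0 a real number. If μ_2/μ_n ≥ r/(r+1), then G is r-tough, i.e., for every vertex set S with c(G−S) > 1 we have |S| ≥ r·c(G−S). -/
open SimpleGraph Matrix

theorem ix_zero {n : ℕ} (hn : 2 ≤ n) : 0 < n := by omega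

theorem ix_one {n : ℕ} (hn : 2 ≤ n) : 1 < n := by omega

theorem ix_last {n : ℕ} (hn : 2 ≤ n) : n - 1 < n := by omega

theorem comb {T K : Type*} [Fintype T] [Fintype K] [DecidableEq T] [DecidableEq K] (f : T → K)
    (hf : Function.Surjective f) (hK : 2 ≤ Fintype.card K) :
    Function.Injective f ∨ ∃ P : Finset K,
      Fintype.card K ≤ 2 * (Finset.univ.filter (fun t => f t ∈ P)).card ∧
      Fintype.card K ≤ 2 * (Finset.univ.filter (fun t => f t ∉ P)).card := by
  by_cases hi : Function.Injective f
  · exact Or.inl hi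
  right
  simp only [Function.Injective] at hi
  push Not at hi
  obtain ⟨a, b, hab, hne⟩ := hi
  obtain ⟨P, h1, h2, h3⟩ := Finset.exists_subsuperset_card_eq (s := {f a}) (t := Finset.univ)
    (n := Fintype.card K / 2) (Finset.subset_univ _) (by simp; omega) (by simp; omega)
  have ha : f a ∈ P := h1 (by simp)
  refine ⟨P, ?_, ?_⟩
  · have : P ⊆ ((Finset.univ.filter (fun t => f t ∈ P)).erase a).image f := by
      intro k hk
      obtain ⟨t, rfl⟩ := hf k
      simp only [Finset.mem_image, Finset.mem_erase, Finset.mem_filter, Finset.mem_univ, true_and]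
      by_cases h : t = a
      · exact ⟨b, ⟨hne.symm, hab ▸ ha⟩, by rw [h, hab]⟩
      · exact ⟨t, ⟨h, hk⟩, rfl⟩
    have h4 := (Finset.card_le_card this).trans Finset.card_image_le
    rw [Finset.card_erase_of_mem (by simp [ha])] at h4
    omega
  · have : Pᶜ ⊆ ((Finset.univ.filter (fun t => f t ∉ P))).image f := by
      intro k hk
      obtain ⟨t, rfl⟩ := hf k
      simp only [Finset.mem_image, Finset.mem_filter, Finset.mem_univ, true_and]
      exact ⟨t, by simpa using hk, rfl⟩
    have h4 := (Finset.card_le_card this).trans Finset.card_image_le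
    rw [Finset.card_compl] at h4
    omega

theorem final_arith (a b r c s : ℝ) (hr : 0 ≤ r) (hab : a ≤ b) (ha : 0 ≤ a) (hs : 0 ≤ s) (hc : 2 ≤ c)
    (hratio : r / (r + 1) ≤ a / b) (h : c * a ≤ s * (b - a)) : r * c ≤ s := by
  rcases (ha.trans hab).eq_or_lt with h0 | h0
  · rw [← h0, div_zero] at hratio
    have : r = 0 := by
      by_contra hne
      have : 0 < r := lt_of_le_of_ne hr (Ne.symm hne)
      have : 0 < r / (r+1) := by positivity
      linarith
    simp [this, hs]
  · rw [div_le_div_iff₀ (by linarith) h0] at hratio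
    rcases hab.eq_or_lt with h1 | h1
    · subst h1; nlinarith
    · have : (r * c) * (b - a) ≤ s * (b - a) := by nlinarith
      exact le_of_mul_le_mul_right this (by linarith)

theorem spec_key {V : Type*} [Fintype V] [DecidableEq V] {A : Matrix V V ℝ} (hA : A.IsHermitian)
    (y z : V → ℝ) : ∑ i, ((hA.eigenvectorBasis i : V → ℝ) ⬝ᵥ y) *
     ((hA.eigenvectorBasis i : V → ℝ) ⬝ᵥ z) = y ⬝ᵥ z := by
  have := hA.eigenvectorBasis.sum_inner_mul_inner (WithLp.toLp 2 y) (WithLp.toLp 2 z)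
  simp only [EuclideanSpace.inner_eq_star_dotProduct] at this
  simpa [dotProduct_comm] using this

theorem spec_mul {V : Type*} [Fintype V] [DecidableEq V] {A : Matrix V V ℝ} (hA : A.IsHermitian)
    (x : V → ℝ) (i : V) : (hA.eigenvectorBasis i : V → ℝ) ⬝ᵥ A.mulVec x
      = hA.eigenvalues i * ((hA.eigenvectorBasis i : V → ℝ) ⬝ᵥ x) := by
  rw [Matrix.dotProduct_mulVec, ← Matrix.mulVec_transpose]
  have h : A.IsSymm := by simpa using hA
  rw [h.eq, hA.mulVec_eigenvectorBasis, smul_dotProduct, smul_eq_mul]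

/-- The Laplacian quadratic form. -/
noncomputable def lapQ {n : ℕ} (G : SimpleGraph (Fin n)) [DecidableRel G.Adj] (x : Fin n → ℝ) : ℝ :=
  (∑ i, ∑ j, if G.Adj i j then (x i - x j) ^ 2 else 0) / 2

theorem lapQ_eq {n : ℕ} (G : SimpleGraph (Fin n)) [DecidableRel G.Adj] (x : Fin n → ℝ) :
    lapQ G x = ∑ i, lapEigs G i *
      (((SimpleGraph.posSemidef_lapMatrix ℝ G).1.eigenvectorBasis i : Fin n → ℝ) ⬝ᵥ x) ^ 2 := by
  rw [lapQ, ← SimpleGraph.lapMatrix_toLinearMap₂', Matrix.toLinearMap₂'_apply',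
    ← spec_key (SimpleGraph.posSemidef_lapMatrix ℝ G).1]
  refine Finset.sum_congr rfl fun i _ => ?_
  rw [spec_mul, lapEigs]; ring

theorem lapQ_shift {n : ℕ} (G : SimpleGraph (Fin n)) [DecidableRel G.Adj] (x : Fin n → ℝ) (a : ℝ) :
    lapQ G (fun i => x i - a) = lapQ G x := by
  simp [lapQ]

theorem lapQ_nonneg {n : ℕ} (G : SimpleGraph (Fin n)) [DecidableRel G.Adj] (x : Fin n → ℝ) :
    0 ≤ lapQ G x := by
  unfold lapQ
  have : ∀ i j, 0 ≤ (if G.Adj i j then (x i - x j) ^ 2 else 0) := by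
    intro i j; split_ifs <;> positivity
  have := Finset.sum_nonneg fun i (_ : i ∈ Finset.univ) =>
    Finset.sum_nonneg fun j (_ : j ∈ Finset.univ) => this i j
  linarith

theorem sum_center {n : ℕ} (hn : 2 ≤ n) (x : Fin n → ℝ) :
    ∑ i, (x i - (∑ j, x j) / n) = 0 := by
  have : (n : ℝ) ≠ 0 := by positivity
  simp [Finset.sum_sub_distrib]
  field_simp; ring

theorem sumsq_center {n : ℕ} (hn : 2 ≤ n) (x : Fin n → ℝ) :
    ∑ i, (x i - (∑ j, x j) / n) ^ 2 = ∑ i, x i ^ 2 - (∑ i, x i) ^ 2 / n := by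
  have : (n : ℝ) ≠ 0 := by positivity
  simp only [sub_sq, Finset.sum_sub_distrib, Finset.sum_add_distrib, ← Finset.sum_mul,
    ← Finset.mul_sum, Finset.sum_const, Finset.card_univ, Fintype.card_fin, nsmul_eq_mul]
  field_simp; ring

theorem lapQ_upper' {n : ℕ} (hn : 2 ≤ n) (G : SimpleGraph (Fin n)) [DecidableRel G.Adj]
    (μ : Fin n → ℝ) (hμ : IsLapSpectrum G μ) (z : Fin n → ℝ) :
    lapQ G z ≤ μ ⟨n - 1, ix_last hn⟩ * ∑ i, z i ^ 2 := by
  obtain ⟨hm, σ, hσ⟩ := hμ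
  have h1 : ∑ i, z i ^ 2 = z ⬝ᵥ z := by simp [dotProduct, sq]
  rw [lapQ_eq, h1, ← spec_key (SimpleGraph.posSemidef_lapMatrix ℝ G).1, Finset.mul_sum]
  refine Finset.sum_le_sum fun i _ => ?_
  rw [← sq]
  refine mul_le_mul_of_nonneg_right ?_ (sq_nonneg _)
  have := hσ (σ.symm i)
  rw [Equiv.apply_symm_apply] at this
  rw [← this]
  exact hm (by rw [Fin.le_def]; simp; omega)

theorem lapQ_upper {n : ℕ} (hn : 2 ≤ n) (G : SimpleGraph (Fin n)) [DecidableRel G.Adj]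
    (μ : Fin n → ℝ) (hμ : IsLapSpectrum G μ) (x : Fin n → ℝ) :
    lapQ G x ≤ μ ⟨n - 1, ix_last hn⟩ * (∑ i, x i ^ 2 - (∑ i, x i) ^ 2 / n) := by
  rw [← sumsq_center hn, ← lapQ_shift G x ((∑ j, x j) / n)]
  exact lapQ_upper' hn G μ hμ _

theorem mu_nonneg {n : ℕ} (G : SimpleGraph (Fin n)) [DecidableRel G.Adj]
    (μ : Fin n → ℝ) (hμ : IsLapSpectrum G μ) (i : Fin n) : 0 ≤ μ i := by
  obtain ⟨hm, σ, hσ⟩ := hμ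
  rw [hσ]
  exact (SimpleGraph.posSemidef_lapMatrix ℝ G).eigenvalues_nonneg _

theorem lapQ_lower' {n : ℕ} (hn : 2 ≤ n) (G : SimpleGraph (Fin n)) [DecidableRel G.Adj]
    (μ : Fin n → ℝ) (hμ : IsLapSpectrum G μ) (z : Fin n → ℝ) (hz : ∑ i, z i = 0) :
    μ ⟨1, ix_one hn⟩ * ∑ i, z i ^ 2 ≤ lapQ G z := by
  rcases (mu_nonneg G μ hμ ⟨1, ix_one hn⟩).eq_or_lt with h0 | h0
  · rw [← h0, zero_mul]; exact lapQ_nonneg G z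
  obtain ⟨hm, σ, hσ⟩ := hμ
  have hle : ∀ i, i ≠ σ ⟨0, ix_zero hn⟩ → μ ⟨1, ix_one hn⟩ ≤ lapEigs G i := by
    intro i hi
    have := hσ (σ.symm i)
    rw [Equiv.apply_symm_apply] at this
    rw [← this]
    apply hm
    rw [Fin.le_def]
    by_contra hcon
    apply hi
    rw [← Equiv.symm_apply_eq, Fin.ext_iff]
    simp at hcon ⊢
    omega
  set hA := (SimpleGraph.posSemidef_lapMatrix ℝ G).1
  have hone : ∀ i, i ≠ σ ⟨0, ix_zero hn⟩ → (hA.eigenvectorBasis i : Fin n → ℝ) ⬝ᵥ (fun _ => 1) = 0 := by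
    intro i hi
    have h := spec_mul hA (fun _ => 1) i
    rw [SimpleGraph.lapMatrix_mulVec_const_eq_zero, dotProduct_zero] at h
    have h2 : 0 < hA.eigenvalues i := h0.trans_le (hle i hi)
    rcases mul_eq_zero.mp h.symm with h | h
    · linarith
    · exact h
  have h3 := spec_key hA z (fun _ => 1)
  have h4 := spec_key hA (fun _ => 1) (fun _ => 1)
  rw [Finset.sum_eq_single (σ ⟨0, ix_zero hn⟩) (fun i _ hi => by rw [hone i hi, mul_zero]) (by simp)] at h3 h4
  have h5 : z ⬝ᵥ (fun _ => 1) = 0 := by simpa [dotProduct] using hz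
  have h6 : ((fun _ => 1 : Fin n → ℝ) ⬝ᵥ (fun _ => 1)) = n := by simp [dotProduct]
  rw [h5] at h3
  rw [h6] at h4
  have hc : (hA.eigenvectorBasis (σ ⟨0, ix_zero hn⟩) : Fin n → ℝ) ⬝ᵥ z = 0 := by
    rcases mul_eq_zero.mp h3 with h | h
    · exact h
    · rw [h, mul_zero] at h4
      have : (0:ℝ) < n := by positivity
      linarith
  have h1 : ∑ i, z i ^ 2 = z ⬝ᵥ z := by simp [dotProduct, sq]
  rw [lapQ_eq, h1, ← spec_key hA, Finset.mul_sum]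
  refine Finset.sum_le_sum fun i _ => ?_
  rw [← sq]
  by_cases hi : i = σ ⟨0, ix_zero hn⟩
  · rw [hi, hc]; simp
  · exact mul_le_mul_of_nonneg_right (hle i hi) (sq_nonneg _)

theorem lapQ_lower {n : ℕ} (hn : 2 ≤ n) (G : SimpleGraph (Fin n)) [DecidableRel G.Adj]
    (μ : Fin n → ℝ) (hμ : IsLapSpectrum G μ) (x : Fin n → ℝ) :
    μ ⟨1, ix_one hn⟩ * (∑ i, x i ^ 2 - (∑ i, x i) ^ 2 / n) ≤ lapQ G x := by
  rw [← sumsq_center hn, ← lapQ_shift G x ((∑ j, x j) / n)]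
  exact lapQ_lower' hn G μ hμ _ (sum_center hn x)

theorem lapQ_indep {n : ℕ} (G : SimpleGraph (Fin n)) [DecidableRel G.Adj] (x : Fin n → ℝ)
    (h : ∀ i j, G.Adj i j → x i * x j = 0) : lapQ G x = ∑ i, (G.degree i : ℝ) * x i ^ 2 := by
  have h1 : ∀ i j, (if G.Adj i j then (x i - x j) ^ 2 else 0) =
      (if G.Adj i j then 1 else 0) * x i ^ 2 + (if G.Adj j i then 1 else 0) * x j ^ 2 := by
    intro i j
    simp only [G.adj_comm j i]
    split_ifs with hij
    · have := h i j hij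
      linear_combination (-2) * this
    · ring
  unfold lapQ
  simp_rw [h1, Finset.sum_add_distrib]
  rw [Finset.sum_comm (f := fun i j => (if G.Adj j i then (1:ℝ) else 0) * x j ^ 2)]
  simp_rw [← Finset.sum_mul, ← SimpleGraph.degree_eq_sum_if_adj]
  ring

/-- Case where `G - S` has no edges. -/
theorem case_indep {n : ℕ} (hn : 2 ≤ n) (G : SimpleGraph (Fin n)) [DecidableRel G.Adj]
    (μ : Fin n → ℝ) (hμ : IsLapSpectrum G μ) (T : Finset (Fin n)) (hT : 2 ≤ T.card)
    (hind : ∀ i ∈ T, ∀ j ∈ T, ¬ G.Adj i j) :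
    μ ⟨1, ix_one hn⟩ * n ≤ μ ⟨n - 1, ix_last hn⟩ * (n - T.card) := by
  have hn0 : (0 : ℝ) < n := by positivity
  have hT2 : (2 : ℝ) ≤ T.card := by exact_mod_cast hT
  set a := μ ⟨1, ix_one hn⟩ with ha
  have h1 := lapQ_upper hn G μ hμ (fun i => if i ∈ T then 1 else 0)
  rw [lapQ_indep] at h1
  swap
  · intro i j hij
    by_cases hi : i ∈ T
    · by_cases hj : j ∈ T
      · exact absurd hij (hind i hi j hj)
      · simp [hj]
    · simp [hi]
  simp only [ite_pow, one_pow, ne_eq, OfNat.ofNat_ne_zero, not_false_eq_true, zero_pow, mul_ite,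
    mul_one, mul_zero, Finset.sum_ite_mem, Finset.univ_inter, Finset.sum_const, nsmul_eq_mul] at h1
  have h2 : ∀ v ∈ T, ∀ w ∈ T, v ≠ w → 2 * a ≤ (G.degree v : ℝ) + G.degree w := by
    intro v hv w hw hvw
    have h := lapQ_lower hn G μ hμ (fun i => (if i = v then 1 else 0) - (if i = w then 1 else 0))
    have e : ∀ i, ((if i = v then (1:ℝ) else 0) - (if i = w then 1 else 0)) ^ 2
        = (if i = v then 1 else 0) + (if i = w then 1 else 0) := by
      intro i
      by_cases h1 : i = v <;> by_cases h2 : i = w <;> simp [h1, h2] <;> grind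
    rw [lapQ_indep] at h
    swap
    · intro i j hij
      have := hind v hv w hw
      have := hind w hw v hv
      have := hij.ne
      split_ifs <;> grind
    simp only [e] at h
    simp [Finset.sum_add_distrib, mul_add] at h
    linarith
  have h3 : (T.card : ℝ) * a ≤ ∑ v ∈ T, (G.degree v : ℝ) := by
    set f : Fin n → ℝ := fun v => G.degree v - a
    have h4 : 0 ≤ ∑ v ∈ T, ∑ w ∈ T, (f v + f w - if v = w then 2 * f v else 0) := by
      refine Finset.sum_nonneg fun v hv => Finset.sum_nonneg fun w hw => ?_
      split_ifs with h
      · subst h; linarith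
      · have := h2 v hv w hw h
        simp only [f]; linarith
    simp only [Finset.sum_sub_distrib, Finset.sum_add_distrib, Finset.sum_ite_eq,
      Finset.sum_const, nsmul_eq_mul, Finset.sum_ite_mem, Finset.inter_self, ← Finset.mul_sum] at h4
    have h5 : ∑ v ∈ T, f v = ∑ v ∈ T, (G.degree v : ℝ) - T.card * a := by
      simp [f, Finset.sum_sub_distrib]
    have h6 : 0 ≤ (T.card - 1) * ∑ v ∈ T, f v := by linarith
    have := nonneg_of_mul_nonneg_right h6 (by linarith)
    linarith
  have h7 := h3.trans h1
  have h8 : (T.card : ℝ) * (a * n) ≤ T.card * (μ ⟨n - 1, ix_last hn⟩ * (n - T.card)) := by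
    have := mul_le_mul_of_nonneg_right h7 hn0.le
    field_simp at this
    exact mul_le_mul_of_nonneg_left this (by linarith)
  exact le_of_mul_le_mul_left h8 (by linarith)

theorem case_split {n : ℕ} (hn : 2 ≤ n) (G : SimpleGraph (Fin n)) [DecidableRel G.Adj]
    (μ : Fin n → ℝ) (hμ : IsLapSpectrum G μ) (X Y : Finset (Fin n)) (hd : Disjoint X Y)
    (c : ℝ) (hc : 0 < c) (hX : c ≤ 2 * X.card) (hY : c ≤ 2 * Y.card)
    (hind : ∀ i ∈ X, ∀ j ∈ Y, ¬ G.Adj i j) :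
    μ ⟨1, ix_one hn⟩ * (n - X.card - Y.card + c) ≤ μ ⟨n - 1, ix_last hn⟩ * (n - X.card - Y.card) := by
  have hn0 : (0 : ℝ) < n := by positivity
  have h1 := lapQ_upper hn G μ hμ (fun i => (if i ∈ X then 1 else 0) + (if i ∈ Y then 1 else 0))
  have h2 := lapQ_lower hn G μ hμ (fun i => (if i ∈ X then 1 else 0) - (if i ∈ Y then 1 else 0))
  have hXY : ∀ i, i ∈ X → i ∉ Y := fun i hi => Finset.disjoint_left.mp hd hi
  have hQ : lapQ G (fun i => (if i ∈ X then 1 else 0) - (if i ∈ Y then 1 else 0)) =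
      lapQ G (fun i => (if i ∈ X then 1 else 0) + (if i ∈ Y then 1 else 0)) := by
    unfold lapQ
    congr 1
    refine Finset.sum_congr rfl fun i _ => Finset.sum_congr rfl fun j _ => ?_
    by_cases hij : G.Adj i j
    · have a1 := hind i
      have a2 := hind j
      have a3 := hij.symm
      have a4 := hXY i
      have a5 := hXY j
      by_cases i ∈ X <;> by_cases i ∈ Y <;> by_cases j ∈ X <;> by_cases j ∈ Y <;> simp_all
    · simp [hij]
  rw [hQ] at h2
  have e1 : ∀ i, ((if i ∈ X then (1:ℝ) else 0) - (if i ∈ Y then 1 else 0)) ^ 2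
        = (if i ∈ X then 1 else 0) + (if i ∈ Y then 1 else 0) := by
    intro i
    have a4 := hXY i
    by_cases i ∈ X <;> by_cases i ∈ Y <;> simp_all
  have e2 : ∀ i, ((if i ∈ X then (1:ℝ) else 0) + (if i ∈ Y then 1 else 0)) ^ 2
        = (if i ∈ X then 1 else 0) + (if i ∈ Y then 1 else 0) := by
    intro i
    have a4 := hXY i
    by_cases i ∈ X <;> by_cases i ∈ Y <;> simp_all
  have h3 := h2.trans h1
  simp only [e1, e2] at h3
  simp only [Finset.sum_add_distrib, Finset.sum_sub_distrib, Finset.sum_ite_mem, Finset.univ_inter,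
    Finset.sum_const, nsmul_eq_mul, mul_one] at h3
  have ha := mu_nonneg G μ hμ ⟨1, ix_one hn⟩
  generalize μ ⟨1, ix_one hn⟩ = a at *
  generalize μ ⟨n - 1, ix_last hn⟩ = b at *
  generalize (X.card : ℝ) = x at *
  generalize (Y.card : ℝ) = y at *
  have h4 := mul_le_mul_of_nonneg_right h3 hn0.le
  have e3 : a * (x + y - (x - y) ^ 2 / n) * n = a * ((n - x - y) * (x + y) + 4 * x * y) := by
    field_simp; ring
  have e4 : b * (x + y - (x + y) ^ 2 / n) * n = b * (n - x - y) * (x + y) := by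
    field_simp; ring
  rw [e3, e4] at h4
  have h5 : c * (x + y) ≤ 4 * x * y := by
    nlinarith [mul_nonneg (sub_nonneg.2 hX) (sub_nonneg.2 hY)]
  have h6 := mul_le_mul_of_nonneg_left h5 ha
  refine le_of_mul_le_mul_right (a := x + y) ?_ (by linarith)
  linarith

theorem stmt12 {n : ℕ} (hn : 2 ≤ n) (G : SimpleGraph (Fin n)) [DecidableRel G.Adj]
    (hnc : G ≠ ⊤) (r : ℝ) (hr : 0 ≤ r) (μ : Fin n → ℝ) (hμ : IsLapSpectrum G μ)
    (hratio : r / (r + 1) ≤ μ ⟨1, by omega⟩ / μ ⟨n - 1, by omega⟩)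
    (S : Finset (Fin n)) (hdis : 2 ≤ numComp G S) :
    r * numComp G S ≤ (S.card : ℝ) := by
  classical
  refine final_arith _ _ r _ _ hr (hμ.1 (by rw [Fin.le_def]; simp; omega))
    (mu_nonneg G μ hμ _) (by positivity) (by exact_mod_cast hdis) hratio ?_
  have hcS : (Sᶜ.card : ℝ) = n - S.card := by
    rw [Finset.card_compl, Nat.cast_sub (Finset.card_le_univ S)]; simp
  have hK : numComp G S = Fintype.card (G.induce ((↑S : Set (Fin n))ᶜ)).ConnectedComponent := by
    rw [numComp, Nat.card_eq_fintype_card]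
  have hcT : Fintype.card ((↑S : Set (Fin n))ᶜ : Set (Fin n)) = Sᶜ.card := by
    rw [← Set.toFinset_card]; congr 1; ext; simp
  have hsurj : Function.Surjective (G.induce ((↑S : Set (Fin n))ᶜ)).connectedComponentMk :=
    fun k => k.exists_rep
  rcases comb _ hsurj (hK ▸ hdis) with hinj | ⟨P, hP, hQ⟩
  · have hcard := Fintype.card_of_bijective ⟨hinj, hsurj⟩
    rw [← hK, hcT] at hcard
    have := case_indep hn G μ hμ Sᶜ (hcard ▸ hdis) (by
      intro i hi j hj hij
      have := hinj (SimpleGraph.ConnectedComponent.sound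
        (SimpleGraph.Adj.reachable (G := G.induce ((↑S : Set (Fin n))ᶜ))
          (u := ⟨i, by simpa using hi⟩) (v := ⟨j, by simpa using hj⟩) (by simpa using hij)))
      simp at this
      exact hij.ne this)
    rw [← hcard, hcS]
    rw [hcS] at this
    linarith
  · rw [← hK] at hP hQ
    have hdj := Finset.disjoint_filter_filter_not (Finset.univ : Finset ((↑S : Set (Fin n))ᶜ : Set (Fin n)))
      Finset.univ (fun t => (G.induce ((↑S : Set (Fin n))ᶜ)).connectedComponentMk t ∈ P)
    have hsum := Finset.card_filter_add_card_filter_not (s := (Finset.univ : Finset ((↑S : Set (Fin n))ᶜ : Set (Fin n))))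
      (fun t => (G.induce ((↑S : Set (Fin n))ᶜ)).connectedComponentMk t ∈ P)
    rw [Finset.card_univ, hcT] at hsum
    have hsum' : (_ : ℝ) = _ := congrArg (Nat.cast) hsum
    rw [Nat.cast_add, hcS] at hsum'
    have := case_split hn G μ hμ
      ((Finset.univ.filter (fun t => (G.induce ((↑S : Set (Fin n))ᶜ)).connectedComponentMk t ∈ P)).map
        (Function.Embedding.subtype _))
      ((Finset.univ.filter (fun t => (G.induce ((↑S : Set (Fin n))ᶜ)).connectedComponentMk t ∉ P)).map
        (Function.Embedding.subtype _)) ((Finset.disjoint_map _).2 hdj) (numComp G S)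
      (by exact_mod_cast (by omega : 0 < numComp G S))
      (by rw [Finset.card_map]; exact_mod_cast hP)
      (by rw [Finset.card_map]; exact_mod_cast hQ)
      (by
        intro i hi j hj hij
        simp only [Finset.mem_map, Finset.mem_filter, Finset.mem_univ, true_and,
          Function.Embedding.coe_subtype] at hi hj
        obtain ⟨i, hi, rfl⟩ := hi
        obtain ⟨j, hj, rfl⟩ := hj
        apply hj
        rw [← SimpleGraph.ConnectedComponent.sound
          (SimpleGraph.Adj.reachable (G := G.induce ((↑S : Set (Fin n))ᶜ)) (u := i) (v := j)
            (by simpa using hij))]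
        exact hi)
    rw [Finset.card_map, Finset.card_map, sub_sub, hsum'] at this
    linarith
end
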